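/- arXiv:2603.09008 — 3 statements merged into one kernel-verified Lean document; each statement's English description precedes it below -/
import Mathlib

section
/- Fix a constant c > 0. For each n, let F^{⌊cn⌋}_n be the number of fixed points of the random permutation of [n] obtained by performing r = ⌊cn⌋ iterated random-to-top shuffles starting from the identity. Then F^{⌊cn⌋}_n converges in distribution, as n → ∞, to X + Y, where X and Y are independent, X is Poisson with mean 1 − e^{−c}, and Y is geometric with P(Y = k) = (1 − e^{−c}) e^{−ck} for all integers k ≥ 0. Equivalently, for every integer ℓ ≥ 0, P(F^{⌊cn⌋}_n = ℓ) → Σ_{j=0}^{ℓ} (1 − e^{−c}) e^{−cj} · e^{−(1−e^{−c})} (1 − e^{−c})^{ℓ−j} / (ℓ−j)! as n → ∞. -/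
open MeasureTheory ProbabilityTheory Filter Finset Topology
open scoped NNReal

/-- Move card `c` to the top (position `0`) of the deck `π`
(where `π i` is the card in position `i`). -/
def moveToTop {n : ℕ} (c : Fin n) (π : Equiv.Perm (Fin n)) : Equiv.Perm (Fin n) :=
  π * ((π⁻¹ c).cycleRange)⁻¹

/-- The permutation (position `i` ↦ card in position `i`) obtained after performing
iterated random-to-top moves with selected cards `s 0, s 1, …`, starting from the
identity deck `(1, 2, …, n)`. -/
def rttPerm (n r : ℕ) (s : Fin r → Fin n) : Equiv.Perm (Fin n) :=
  (List.ofFn s).foldl (fun π c => moveToTop c π) 1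

/-- Number of fixed points of a permutation. -/
def fixedPointCount {n : ℕ} (π : Equiv.Perm (Fin n)) : ℕ :=
  (Finset.univ.filter fun i => π i = i).card

/-- Number of descents of a permutation. -/
def descentCount {n : ℕ} (π : Equiv.Perm (Fin n)) : ℕ :=
  (Finset.univ.filter fun p : Fin n × Fin n =>
    (p.1 : ℕ) + 1 = (p.2 : ℕ) ∧ π p.2 < π p.1).card

/-- Number of inversions of a permutation. -/
def inversionCount {n : ℕ} (π : Equiv.Perm (Fin n)) : ℕ :=
  (Finset.univ.filter fun p : Fin n × Fin n => p.1 < p.2 ∧ π p.2 < π p.1).card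

/-- The number of distinct values among `s 0, …, s (r-1)` (the occupancy count `K^r_n`). -/
def distinctCount (n r : ℕ) (s : Fin r → Fin n) : ℕ :=
  (Finset.univ.image s).card

/-- Probability of the event `p` under the uniform distribution on the finite type `α`. -/
noncomputable def unifProb {α : Type*} [Fintype α] (p : α → Prop) : ℝ :=
  (Nat.card {x : α // p x} : ℝ) / (Fintype.card α : ℝ)

/-- Expectation of `f` under the uniform distribution on the finite type `α`. -/
noncomputable def unifExpect {α : Type*} [Fintype α] (f : α → ℝ) : ℝ :=
  (∑ x, f x) / (Fintype.card α : ℝ)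

/-- Variance of `f` under the uniform distribution on the finite type `α`. -/
noncomputable def unifVar {α : Type*} [Fintype α] (f : α → ℝ) : ℝ :=
  unifExpect fun x => (f x - unifExpect f) ^ 2

/-- `max_{1 ≤ i ≤ k} π(i)`: the maximum card value (in `{1, …, n}`, i.e. `val + 1`)
among the first `k` positions of `π`. -/
def maxFirst (n k : ℕ) (π : Equiv.Perm (Fin n)) : ℕ :=
  (Finset.univ.filter fun i : Fin n => (i : ℕ) < k).sup fun i => (π i : ℕ) + 1

/-- The number of fixed points among the first `k` positions of `π`. -/
def fixedFirst (n k : ℕ) (π : Equiv.Perm (Fin n)) : ℕ :=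
  (Finset.univ.filter fun i : Fin n => (i : ℕ) < k ∧ π i = i).card

/-- The deck obtained from `π₀` by moving the cards of `l` to the top successively. -/
def runDeck {n : ℕ} (π₀ : Equiv.Perm (Fin n)) (l : List (Fin n)) : Equiv.Perm (Fin n) :=
  l.foldl (fun π c => moveToTop c π) π₀

lemma runDeck_append {n : ℕ} (π₀ : Equiv.Perm (Fin n)) (l : List (Fin n)) (c : Fin n) :
    runDeck π₀ (l ++ [c]) = moveToTop c (runDeck π₀ l) := by
  simp [runDeck]

lemma moveToTop_equivariant {n : ℕ} (σ π : Equiv.Perm (Fin n)) (c : Fin n) :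
    moveToTop (σ c) (σ * π) = σ * moveToTop c π := by
  simp [moveToTop, mul_assoc]

lemma runDeck_equivariant {n : ℕ} (σ π₀ : Equiv.Perm (Fin n)) (l : List (Fin n)) :
    runDeck (σ * π₀) (l.map σ) = σ * runDeck π₀ l := by
  induction l using List.reverseRecOn with
  | nil => simp [runDeck]
  | append_singleton l c ih =>
    rw [List.map_append, List.map_singleton, runDeck_append, runDeck_append, ih,
      moveToTop_equivariant]

lemma moveToTop_zero {m : ℕ} (c : Fin (m + 1)) (π : Equiv.Perm (Fin (m + 1))) :
    moveToTop c π 0 = c := by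
  have := Fin.cycleRange_symm_zero (π⁻¹ c)
  simp only [moveToTop, Equiv.Perm.mul_apply]
  rw [Equiv.Perm.inv_def (Fin.cycleRange _), this]
  simp

lemma moveToTop_succ {m : ℕ} (c : Fin (m + 1)) (π : Equiv.Perm (Fin (m + 1))) (i : Fin m) :
    moveToTop c π i.succ = π ((π⁻¹ c).succAbove i) := by
  have := Fin.cycleRange_symm_succ (π⁻¹ c) i
  simp only [moveToTop, Equiv.Perm.mul_apply]
  rw [Equiv.Perm.inv_def (Fin.cycleRange _), this]

lemma succAbove_val {m : ℕ} (j : Fin (m + 1)) (i : Fin m) :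
    (j.succAbove i : ℕ) = if (i : ℕ) < j then (i : ℕ) else i + 1 := by
  unfold Fin.succAbove
  simp only [Fin.lt_def, Fin.val_castSucc]
  split_ifs <;> simp

lemma card_toFinset_append {n : ℕ} (l : List (Fin n)) (c : Fin n) :
    (l ++ [c]).toFinset.card = if c ∈ l then l.toFinset.card else l.toFinset.card + 1 := by
  have : (l ++ [c]).toFinset = insert c l.toFinset := by ext; simp
  rw [this]
  split_ifs with h
  · rw [Finset.insert_eq_of_mem (by simpa using h)]
  · rw [Finset.card_insert_of_notMem (by simpa using h)]

lemma runDeck_mem {n : ℕ} (π₀ : Equiv.Perm (Fin n)) (l : List (Fin n)) (i : Fin n) :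
    runDeck π₀ l i ∈ l ↔ (i : ℕ) < l.toFinset.card := by
  induction l using List.reverseRecOn generalizing i with
  | nil => simp
  | append_singleton l c ih =>
    obtain _ | m := n
    · exact i.elim0
    rw [runDeck_append, card_toFinset_append]
    set π := runDeck π₀ l with hπ
    have hc : c ∈ l ↔ ((π⁻¹ c : Fin (m + 1)) : ℕ) < l.toFinset.card := by
      rw [← ih (π⁻¹ c)]; simp
    refine Fin.cases ?_ (fun i => ?_) i
    · rw [moveToTop_zero]
      simp only [List.mem_append, List.mem_singleton, or_true, true_iff, Fin.val_zero]
      split_ifs with h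
      · rw [hc] at h; omega
      · omega
    · rw [moveToTop_succ]
      have hne : π ((π⁻¹ c).succAbove i) ≠ c := by
        intro h
        apply Fin.succAbove_ne (π⁻¹ c) i
        rw [Equiv.Perm.eq_inv_iff_eq]; exact h
      simp only [List.mem_append, List.mem_singleton, hne, or_false]
      rw [ih, succAbove_val, Fin.val_succ]
      simp only [hc]
      split_ifs <;> omega

lemma runDeck_mono {n : ℕ} (l : List (Fin n)) (a b : Fin n) (hab : a < b)
    (ha : l.toFinset.card ≤ a) : runDeck 1 l a < runDeck 1 l b := by
  induction l using List.reverseRecOn generalizing a b with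
  | nil => simpa [runDeck] using hab
  | append_singleton l c ih =>
    obtain _ | m := n
    · exact a.elim0
    rw [card_toFinset_append] at ha
    rw [runDeck_append]
    have hc : c ∈ l ↔ (((runDeck 1 l)⁻¹ c : Fin (m + 1)) : ℕ) < l.toFinset.card := by
      rw [← runDeck_mem 1 l]; simp
    revert hab ha
    refine Fin.cases ?_ (fun i => ?_) a
    · intro hab ha
      split_ifs at ha with h
      · rw [hc] at h; simp only [Fin.val_zero] at ha; omega
      · simp only [Fin.val_zero] at ha; omega
    refine Fin.cases ?_ (fun j => ?_) b
    · intro h; exact absurd h (by simp)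
    intro hab ha
    rw [moveToTop_succ, moveToTop_succ]
    apply ih
    · exact Fin.strictMono_succAbove _ (by simpa using hab)
    · rw [succAbove_val]
      rw [Fin.val_succ] at ha
      simp only [hc] at ha
      split_ifs at ha ⊢ <;> omega

lemma runDeck_agree {n : ℕ} (π₀ ρ₀ : Equiv.Perm (Fin n)) (l : List (Fin n)) (i : Fin n)
    (hi : (i : ℕ) < l.toFinset.card) : runDeck π₀ l i = runDeck ρ₀ l i := by
  induction l using List.reverseRecOn generalizing i with
  | nil => simp at hi
  | append_singleton l c ih =>
    obtain _ | m := n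
    · exact i.elim0
    rw [card_toFinset_append] at hi
    rw [runDeck_append, runDeck_append]
    have hc : c ∈ l ↔ (((runDeck π₀ l)⁻¹ c : Fin (m + 1)) : ℕ) < l.toFinset.card := by
      rw [← runDeck_mem π₀ l]; simp
    have hc' : c ∈ l ↔ (((runDeck ρ₀ l)⁻¹ c : Fin (m + 1)) : ℕ) < l.toFinset.card := by
      rw [← runDeck_mem ρ₀ l]; simp
    revert hi
    refine Fin.cases ?_ (fun i => ?_) i
    · intro _; rw [moveToTop_zero, moveToTop_zero]
    intro hi
    rw [moveToTop_succ, moveToTop_succ]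
    by_cases h : c ∈ l
    · have hj : (runDeck ρ₀ l)⁻¹ c = (runDeck π₀ l)⁻¹ c := by
        rw [Equiv.Perm.inv_eq_iff_eq, ← ih _ (hc.1 h)]; simp
      rw [hj]
      apply ih
      have := hc.1 h
      rw [if_pos h, Fin.val_succ] at hi
      rw [succAbove_val]
      split_ifs <;> omega
    · rw [if_neg h, Fin.val_succ] at hi
      have h1 : ¬ _ := fun q => h (hc.2 q)
      have h2 : ¬ _ := fun q => h (hc'.2 q)
      have : ((runDeck ρ₀ l)⁻¹ c).succAbove i = ((runDeck π₀ l)⁻¹ c).succAbove i := by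
        ext
        rw [succAbove_val, succAbove_val, if_pos (by omega), if_pos (by omega)]
      rw [this]
      apply ih
      rw [succAbove_val]
      split_ifs <;> omega

lemma toFinset_ofFn_card {n r : ℕ} (s : Fin r → Fin n) :
    (List.ofFn s).toFinset.card = distinctCount n r s := by
  unfold distinctCount
  congr 1
  ext x
  simp

lemma rttPerm_comp_agree {n r : ℕ} (σ : Equiv.Perm (Fin n)) (s : Fin r → Fin n) (i : Fin n)
    (hi : (i : ℕ) < distinctCount n r s) :
    rttPerm n r (σ ∘ s) i = (σ * rttPerm n r s) i := by
  have h1 : rttPerm n r (σ ∘ s) = runDeck 1 ((List.ofFn s).map σ) := by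
    rw [List.map_ofFn]; rfl
  have h2 : σ * rttPerm n r s = runDeck (σ * 1) ((List.ofFn s).map σ) := by
    rw [runDeck_equivariant]; rfl
  rw [h1, h2]
  apply runDeck_agree
  have : ((List.ofFn s).map σ).toFinset = (List.ofFn s).toFinset.image σ := by
    ext; simp
  rw [this, Finset.card_image_of_injective _ σ.injective, toFinset_ofFn_card]
  exact hi

lemma distinctCount_comp {n r : ℕ} (σ : Equiv.Perm (Fin n)) (s : Fin r → Fin n) :
    distinctCount n r (σ ∘ s) = distinctCount n r s := by
  unfold distinctCount
  rw [← Finset.image_image, Finset.card_image_of_injective _ σ.injective]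

lemma distinctCount_le {n r : ℕ} (s : Fin r → Fin n) : distinctCount n r s ≤ n := by
  unfold distinctCount
  exact (Finset.card_le_univ _).trans (by simp)

/-- The fixed-point statistic depending only on the first `k` positions. -/
def topStat (n k : ℕ) (π : Equiv.Perm (Fin n)) : ℕ :=
  fixedFirst n k π + (n - maxFirst n k π)

lemma maxFirst_le_iff {n k : ℕ} (π : Equiv.Perm (Fin n)) (m : ℕ) :
    maxFirst n k π ≤ m ↔ ∀ i : Fin n, (i : ℕ) < k → (π i : ℕ) < m := by
  unfold maxFirst
  rw [Finset.sup_le_iff]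
  simp

lemma bottom_fixed_iff {n k : ℕ} (π : Equiv.Perm (Fin n))
    (hmono : ∀ a b : Fin n, a < b → k ≤ a → π a < π b) (i : Fin n) (hi : k ≤ i) :
    π i = i ↔ ∀ j : Fin n, (j : ℕ) < k → π j < i := by
  have hsub : (Finset.Ioi i).map π.toEmbedding ⊆ Finset.Ioi (π i) := by
    intro x hx
    simp only [Finset.mem_map, Finset.mem_Ioi, Equiv.coe_toEmbedding] at hx ⊢
    obtain ⟨a, ha, rfl⟩ := hx
    exact hmono _ _ ha hi
  constructor
  · intro h j hj
    rw [h] at hsub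
    have heq := Finset.eq_of_subset_of_card_le hsub (by simp)
    have hji : j < i := Fin.lt_def.2 (by omega)
    rcases lt_trichotomy (π j) i with h1 | h1 | h1
    · exact h1
    · exact absurd (π.injective (h1.trans h.symm)) hji.ne
    · have : π j ∈ Finset.Ioi i := Finset.mem_Ioi.2 h1
      rw [← heq] at this
      simp only [Finset.mem_map, Finset.mem_Ioi, Equiv.coe_toEmbedding] at this
      obtain ⟨a, ha, hab⟩ := this
      have := π.injective hab
      subst this
      exact absurd ha (not_lt.2 hji.le)
  · intro h
    rcases lt_trichotomy (π i) i with h1 | h1 | h1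
    · exfalso
      have : (Finset.Iic i).map π.toEmbedding ⊆ Finset.Iio i := by
        intro x hx
        simp only [Finset.mem_map, Finset.mem_Iic, Finset.mem_Iio, Equiv.coe_toEmbedding] at hx ⊢
        obtain ⟨a, ha, rfl⟩ := hx
        rcases lt_or_ge (a : ℕ) k with hak | hak
        · exact h a hak
        · rcases ha.lt_or_eq with ha | rfl
          · exact (hmono _ _ ha hak).trans h1
          · exact h1
      have := Finset.card_le_card this
      simp at this
    · exact h1
    · exfalso
      have := Finset.card_le_card hsub
      simp at this
      have h2 := (π i).isLt
      have h3 := Fin.lt_def.1 h1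
      omega

lemma fixedPointCount_eq_topStat {n k : ℕ} (π : Equiv.Perm (Fin n)) (hk : k ≤ n)
    (hmono : ∀ a b : Fin n, a < b → k ≤ a → π a < π b) :
    fixedPointCount π = topStat n k π := by
  unfold fixedPointCount topStat fixedFirst
  have hM : maxFirst n k π ≤ n := (maxFirst_le_iff π n).2 (fun i _ => (π i).isLt)
  have h1 := Finset.card_filter_add_card_filter_not
    (s := Finset.univ.filter fun i => π i = i) (fun i : Fin n => (i : ℕ) < k)
  rw [← h1, Finset.filter_filter, Finset.filter_filter]
  congr 1
  · congr 1; ext; simp [and_comm]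
  · have : (Finset.univ.filter fun i : Fin n => π i = i ∧ ¬ (i : ℕ) < k)
        = Finset.univ.filter fun i : Fin n => ¬ ((i : ℕ) < maxFirst n k π) := by
      ext i
      simp only [Finset.mem_filter, Finset.mem_univ, true_and, not_lt]
      rw [maxFirst_le_iff]
      constructor
      · rintro ⟨h, h2⟩
        exact (bottom_fixed_iff π hmono i h2).1 h
      · intro h
        have hki : k ≤ i := by
          have hs : (Finset.univ.filter fun a : Fin n => (a : ℕ) < k).map π.toEmbedding
              ⊆ Finset.Iio i := by
            intro x hx
            simp only [Finset.mem_map, Finset.mem_filter, Finset.mem_univ, true_and,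
              Finset.mem_Iio, Equiv.coe_toEmbedding] at hx ⊢
            obtain ⟨a, ha, rfl⟩ := hx
            exact h a ha
          have := Finset.card_le_card hs
          simpa [Fin.card_filter_val_lt, hk] using this
        exact ⟨(bottom_fixed_iff π hmono i hki).2 h, hki⟩
    rw [this, Finset.filter_not, Finset.card_sdiff_of_subset (Finset.filter_subset _ _)]
    simp [Fin.card_filter_val_lt, hM]

lemma topStat_congr {n k : ℕ} (π ρ : Equiv.Perm (Fin n))
    (h : ∀ i : Fin n, (i : ℕ) < k → π i = ρ i) : topStat n k π = topStat n k ρ := by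
  unfold topStat fixedFirst maxFirst
  congr 2
  · ext i
    simp only [Finset.mem_filter, Finset.mem_univ, true_and]
    constructor
    · rintro ⟨a, b⟩; exact ⟨a, h i a ▸ b⟩
    · rintro ⟨a, b⟩; exact ⟨a, (h i a).trans b⟩
  · apply Finset.sup_congr rfl
    intro i hi
    rw [h i (by simpa using hi)]

lemma fixedPointCount_rttPerm {n r : ℕ} (s : Fin r → Fin n) :
    fixedPointCount (rttPerm n r s) = topStat n (distinctCount n r s) (rttPerm n r s) := by
  apply fixedPointCount_eq_topStat _ (distinctCount_le s)
  intro a b hab ha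
  apply runDeck_mono _ _ _ hab
  rwa [toFinset_ofFn_card]

lemma fixedPointCount_rttPerm_comp {n r : ℕ} (σ : Equiv.Perm (Fin n)) (s : Fin r → Fin n) :
    fixedPointCount (rttPerm n r (σ ∘ s)) =
      topStat n (distinctCount n r s) (σ * rttPerm n r s) := by
  rw [fixedPointCount_rttPerm, distinctCount_comp]
  exact topStat_congr _ _ fun i hi => rttPerm_comp_agree σ s i hi

lemma unifProb_eq_expect {α : Type*} [Fintype α] (p : α → Prop) [DecidablePred p] :
    unifProb p = unifExpect fun x => if p x then (1 : ℝ) else 0 := by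
  unfold unifProb unifExpect
  rw [Nat.card_eq_fintype_card, Fintype.card_subtype, Finset.sum_boole]

lemma unifProb_rtt {n r : ℕ} (ℓ : ℕ) :
    unifProb (fun s : Fin r → Fin n => fixedPointCount (rttPerm n r s) = ℓ) =
      unifExpect (fun s : Fin r → Fin n =>
        unifProb (fun σ : Equiv.Perm (Fin n) => topStat n (distinctCount n r s) σ = ℓ)) := by
  rw [unifProb_eq_expect]
  simp only [unifProb_eq_expect]
  unfold unifExpect
  congr 1
  rw [← Finset.sum_div]
  have hpos : (Fintype.card (Equiv.Perm (Fin n)) : ℝ) ≠ 0 := by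
    exact_mod_cast Fintype.card_ne_zero
  rw [eq_div_iff hpos]
  have key : ∀ σ : Equiv.Perm (Fin n),
      ∑ s : Fin r → Fin n, (if fixedPointCount (rttPerm n r s) = ℓ then (1 : ℝ) else 0) =
      ∑ s : Fin r → Fin n,
        (if topStat n (distinctCount n r s) (σ * rttPerm n r s) = ℓ then (1 : ℝ) else 0) := by
    intro σ
    rw [← Equiv.sum_comp (Equiv.arrowCongr (Equiv.refl (Fin r)) σ)]
    apply Finset.sum_congr rfl
    intro s _
    rw [← fixedPointCount_rttPerm_comp]
    rfl
  have : ∑ σ : Equiv.Perm (Fin n), ∑ s : Fin r → Fin n,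
      (if fixedPointCount (rttPerm n r s) = ℓ then (1 : ℝ) else 0) =
      ∑ σ : Equiv.Perm (Fin n), ∑ s : Fin r → Fin n,
        (if topStat n (distinctCount n r s) (σ * rttPerm n r s) = ℓ then (1 : ℝ) else 0) :=
    Finset.sum_congr rfl fun σ _ => key σ
  rw [Finset.sum_const, Finset.card_univ, nsmul_eq_mul, mul_comm] at this
  rw [this, Finset.sum_comm]
  apply Finset.sum_congr rfl
  intro s _
  exact Equiv.sum_comp (Equiv.mulRight (rttPerm n r s))
    (fun σ => if topStat n (distinctCount n r s) σ = ℓ then (1 : ℝ) else 0)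

lemma card_perm_fix {α : Type*} [Fintype α] [DecidableEq α] (A : Finset α) :
    (Finset.univ.filter fun σ : Equiv.Perm α => ∀ a ∈ A, σ a = a).card =
      (Fintype.card α - A.card).factorial := by
  have e := Equiv.Perm.subtypeEquivSubtypePerm (fun a : α => a ∉ A)
  have h := Fintype.card_congr e
  rw [Fintype.card_perm] at h
  have h2 : Fintype.card {a : α // a ∉ A} = Fintype.card α - A.card := by
    rw [Fintype.card_subtype_compl]; simp
  rw [← h2, h, Fintype.card_subtype]
  simp

lemma card_perm_extend {α : Type*} [Fintype α] [DecidableEq α] (A : Finset α) (f : α → α)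
    (hf : Set.InjOn f A) :
    (Finset.univ.filter fun σ : Equiv.Perm α => ∀ a ∈ A, σ a = f a).card =
      (Fintype.card α - A.card).factorial := by
  obtain ⟨g, hg⟩ := Finset.exists_equiv_extend_of_card_eq (α := α) (β := α)
    (t := Finset.univ) (by simp) (s := A) (f := f) (by simp) hf
  let τ : Equiv.Perm α := g.trans (Equiv.subtypeUnivEquiv (by simp))
  have hτ : ∀ a ∈ A, τ a = f a := fun a ha => hg a ha
  rw [← card_perm_fix A]
  apply Finset.card_equiv (Equiv.mulLeft τ⁻¹)
  intro σ
  simp only [Finset.mem_filter, Finset.mem_univ, true_and, Equiv.coe_mulLeft,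
    Equiv.Perm.mul_apply]
  refine forall₂_congr fun a ha => ?_
  rw [Equiv.Perm.inv_eq_iff_eq, hτ a ha]

lemma card_perm_fix_into {α : Type*} [Fintype α] [DecidableEq α] (S T U : Finset α)
    (hST : Disjoint S T) (hSU : Disjoint S U) :
    (Finset.univ.filter fun σ : Equiv.Perm α =>
      (∀ a ∈ S, σ a = a) ∧ ∀ a ∈ T, σ a ∈ U).card =
      U.card.descFactorial T.card * (Fintype.card α - (S.card + T.card)).factorial := by
  classical
  let F : (T ↪ U) → Finset (Equiv.Perm α) := fun φ =>
    Finset.univ.filter fun σ : Equiv.Perm α => ∀ a ∈ S ∪ T, σ a =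
      if h : a ∈ T then (φ ⟨a, h⟩ : α) else a
  have hF : ∀ φ, (F φ).card = (Fintype.card α - (S.card + T.card)).factorial := by
    intro φ
    have := card_perm_extend (S ∪ T)
      (fun a => if h : a ∈ T then (φ ⟨a, h⟩ : α) else a) ?_
    · rw [← Finset.card_union_of_disjoint hST, ← this]
    · intro a ha b hb hab
      simp only [Finset.coe_union, Set.mem_union, Finset.mem_coe] at ha hb
      by_cases h1 : a ∈ T <;> by_cases h2 : b ∈ T
      · simp only [h1, h2, dif_pos] at hab
        have := φ.injective (Subtype.ext hab)
        simpa using this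
      · simp only [h1, h2, dif_pos, dif_neg, not_false_eq_true] at hab
        have hb' := hb.resolve_right h2
        exact absurd (hab ▸ (φ ⟨a, h1⟩).2) (Finset.disjoint_left.1 hSU hb')
      · simp only [h1, h2, dif_pos, dif_neg, not_false_eq_true] at hab
        have ha' := ha.resolve_right h1
        exact absurd (hab ▸ (φ ⟨b, h2⟩).2) (Finset.disjoint_left.1 hSU ha')
      · simpa only [h1, h2, dif_neg, not_false_eq_true] using hab
  have hU : (Finset.univ.filter fun σ : Equiv.Perm α =>
      (∀ a ∈ S, σ a = a) ∧ ∀ a ∈ T, σ a ∈ U) = Finset.univ.biUnion F := by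
    ext σ
    simp only [Finset.mem_filter, Finset.mem_univ, true_and, Finset.mem_biUnion, F]
    constructor
    · rintro ⟨h1, h2⟩
      refine ⟨⟨fun a => ⟨σ a, h2 a a.2⟩, fun a b hab => ?_⟩, ?_⟩
      · exact Subtype.ext (σ.injective (congrArg Subtype.val hab))
      · intro a ha
        by_cases h : a ∈ T
        · rw [dif_pos h]; rfl
        · simp [h, h1 a ((Finset.mem_union.1 ha).resolve_right h)]
    · rintro ⟨φ, h⟩
      constructor
      · intro a ha
        have := h a (Finset.mem_union_left _ ha)
        rwa [dif_neg (Finset.disjoint_left.1 hST ha)] at this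
      · intro a ha
        have := h a (Finset.mem_union_right _ ha)
        rw [dif_pos ha] at this
        rw [this]
        exact (φ ⟨a, ha⟩).2
  rw [hU, Finset.card_biUnion, Finset.sum_congr rfl fun φ _ => hF φ, Finset.sum_const,
    Finset.card_univ, Fintype.card_embedding_eq]
  · simp
  · intro φ _ ψ _ hne
    rw [Function.onFun, Finset.disjoint_left]
    intro σ h1 h2
    apply hne
    ext a
    simp only [Finset.mem_filter, Finset.mem_univ, true_and, F] at h1 h2
    have h1 := h1 a (Finset.mem_union_right _ a.2)
    have h2 := h2 a (Finset.mem_union_right _ a.2)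
    rw [h1] at h2
    simpa using h2

lemma card_perm_top {n k t : ℕ} (hk : k ≤ n) (ht : t ≤ n) (S : Finset (Fin n))
    (hS : ∀ a ∈ S, (a : ℕ) < k) :
    (Finset.univ.filter fun σ : Equiv.Perm (Fin n) =>
      (∀ a ∈ S, σ a = a) ∧ maxFirst n k σ ≤ n - t).card =
      (n - k).descFactorial t * (n - (S.card + t)).factorial := by
  set T : Finset (Fin n) := Finset.univ.filter fun i => ¬ ((i : ℕ) < n - t) with hT
  set U : Finset (Fin n) := Finset.univ.filter fun i => ¬ ((i : ℕ) < k) with hU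
  have hTc : T.card = t := by
    rw [hT, Finset.filter_not, Finset.card_sdiff_of_subset (Finset.filter_subset _ _)]
    simp only [Fin.card_filter_val_lt, Finset.card_univ, Fintype.card_fin]
    omega
  have hUc : U.card = n - k := by
    rw [hU, Finset.filter_not, Finset.card_sdiff_of_subset (Finset.filter_subset _ _)]
    simp [Fin.card_filter_val_lt, hk]
  have h1 : (Finset.univ.filter fun σ : Equiv.Perm (Fin n) =>
      (∀ a ∈ S, σ a = a) ∧ maxFirst n k σ ≤ n - t).card =
      (Finset.univ.filter fun σ : Equiv.Perm (Fin n) =>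
      (∀ a ∈ S, σ a = a) ∧ ∀ a ∈ T, σ a ∈ U).card := by
    apply Finset.card_equiv (Equiv.inv (Equiv.Perm (Fin n)))
    intro σ
    simp only [Finset.mem_filter, Finset.mem_univ, true_and, Equiv.inv_apply]
    apply and_congr
    · refine forall₂_congr fun a _ => ?_
      rw [Equiv.Perm.inv_eq_iff_eq, eq_comm]
    · rw [maxFirst_le_iff]
      simp only [hT, hU, Finset.mem_filter, Finset.mem_univ, true_and]
      constructor
      · intro h a ha h2
        have := h _ h2
        simp at this
        omega
      · intro h i hi
        by_contra hc
        have := h _ hc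
        simp at this
        omega
  rw [h1]
  by_cases htk : t ≤ n - k
  · have h2 := card_perm_fix_into S T U ?_ ?_
    · rw [hTc, hUc, Fintype.card_fin] at h2
      convert h2
    · rw [Finset.disjoint_left]
      intro a ha hb
      have := hS a ha
      simp only [hT, Finset.mem_filter, Finset.mem_univ, true_and] at hb
      omega
    · rw [Finset.disjoint_left]
      intro a ha hb
      have := hS a ha
      simp only [hU, Finset.mem_filter, Finset.mem_univ, true_and] at hb
      omega
  · rw [Nat.descFactorial_of_lt (by omega), zero_mul, Finset.card_eq_zero,
      Finset.filter_eq_empty_iff]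
    rintro σ - ⟨-, h⟩
    have : T.card ≤ U.card := Finset.card_le_card_of_injOn σ h σ.injective.injOn
    omega

lemma sum_choose_fixedFirst {n k t : ℕ} (hk : k ≤ n) (ht : t ≤ n) (j : ℕ) :
    ∑ σ : Equiv.Perm (Fin n), (if maxFirst n k σ ≤ n - t then (fixedFirst n k σ).choose j else 0)
      = k.choose j * ((n - k).descFactorial t * (n - (j + t)).factorial) := by
  set P : Finset (Finset (Fin n)) :=
    Finset.powersetCard j (Finset.univ.filter fun i : Fin n => (i : ℕ) < k) with hP
  have hPc : P.card = k.choose j := by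
    rw [hP, Finset.card_powersetCard, Fin.card_filter_val_lt, min_eq_right hk]
  have h1 : ∀ σ : Equiv.Perm (Fin n),
      (if maxFirst n k σ ≤ n - t then (fixedFirst n k σ).choose j else 0) =
      ∑ S ∈ P, if (∀ a ∈ S, σ a = a) ∧ maxFirst n k σ ≤ n - t then 1 else 0 := by
    intro σ
    split_ifs with h
    · simp only [h, and_true]
      rw [← Finset.card_filter, fixedFirst, ← Finset.card_powersetCard]
      congr 1
      ext S
      simp only [hP, Finset.mem_powersetCard, Finset.mem_filter, Finset.subset_iff,
        Finset.mem_univ, true_and]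
      constructor
      · rintro ⟨a, b⟩; exact ⟨⟨fun x hx => (a hx).1, b⟩, fun x hx => (a hx).2⟩
      · rintro ⟨⟨a, b⟩, c⟩; exact ⟨fun x hx => ⟨a hx, c x hx⟩, b⟩
    · simp [h]
  rw [Finset.sum_congr rfl fun σ _ => h1 σ, Finset.sum_comm]
  have h2 : ∀ S ∈ P, ∑ σ : Equiv.Perm (Fin n),
      (if (∀ a ∈ S, σ a = a) ∧ maxFirst n k σ ≤ n - t then 1 else 0) =
      (n - k).descFactorial t * (n - (j + t)).factorial := by
    intro S hS
    rw [hP, Finset.mem_powersetCard] at hS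
    rw [← Finset.card_filter, card_perm_top hk ht S, hS.2]
    intro a ha
    simpa using hS.1 ha
  rw [Finset.sum_congr rfl h2, Finset.sum_const, hPc, smul_eq_mul]

/-- Normalised factorial moment. -/
noncomputable def momA (n k t j : ℕ) : ℝ :=
  ((k.descFactorial j : ℝ) * ((n - k).descFactorial t : ℝ)) / (n.descFactorial (j + t) : ℝ) /
    (j.factorial : ℝ)

lemma momA_eq {n k t : ℕ} (hk : k ≤ n) (ht : t ≤ n) (j : ℕ) :
    unifExpect (fun σ : Equiv.Perm (Fin n) =>
      if maxFirst n k σ ≤ n - t then ((fixedFirst n k σ).choose j : ℝ) else 0) =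
    momA n k t j := by
  unfold unifExpect momA
  have h := sum_choose_fixedFirst hk ht j
  have h' : ∑ σ : Equiv.Perm (Fin n),
      (if maxFirst n k σ ≤ n - t then ((fixedFirst n k σ).choose j : ℝ) else 0) =
      k.choose j * ((n - k).descFactorial t * (n - (j + t)).factorial) := by
    exact_mod_cast h
  rw [h', Fintype.card_perm, Fintype.card_fin]
  have hkj : (k.descFactorial j : ℝ) = j.factorial * k.choose j := by
    exact_mod_cast Nat.descFactorial_eq_factorial_mul_choose k j
  by_cases hj : j + t ≤ n
  · have h3 : ((n - (j + t)).factorial : ℝ) * n.descFactorial (j + t) = n.factorial := by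
      exact_mod_cast Nat.factorial_mul_descFactorial hj
    have h4 : (n.descFactorial (j + t) : ℝ) ≠ 0 := by
      have := Nat.factorial_pos n
      intro h0
      rw [h0, mul_zero] at h3
      exact this.ne (by exact_mod_cast h3)
    have h5 : ((n - (j + t)).factorial : ℝ) ≠ 0 := by exact_mod_cast Nat.factorial_ne_zero _
    have h6 : (j.factorial : ℝ) ≠ 0 := by exact_mod_cast Nat.factorial_ne_zero _
    rw [← h3, hkj]
    field_simp
  · rw [Nat.descFactorial_of_lt (by omega : n < j + t)]
    rcases lt_or_ge k j with h | h
    · rw [Nat.choose_eq_zero_of_lt h]; simp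
    · rw [Nat.descFactorial_of_lt (by omega : n - k < t)]; simp

lemma momA_nonneg (n k t j : ℕ) : 0 ≤ momA n k t j := by
  unfold momA; positivity

lemma momA_le {n k : ℕ} (hk : k ≤ n) (t j : ℕ) : momA n k t j ≤ 1 / (j.factorial : ℝ) := by
  unfold momA
  have : k.descFactorial j * (n - k).descFactorial t ≤ n.descFactorial (j + t) := by
    rcases lt_or_ge k j with h | h
    · rw [Nat.descFactorial_of_lt h]; simp
    · have := Nat.descFactorial_mul_descFactorial (n := n) (Nat.le_add_right j t)
      rw [← this, Nat.add_sub_cancel_left, mul_comm]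
      exact Nat.mul_le_mul (Nat.descFactorial_le _ (by omega)) (Nat.descFactorial_le _ hk)
  gcongr
  apply div_le_one_of_le₀ _ (by positivity)
  exact_mod_cast this

lemma indicator_choose (X x N : ℕ) (h : X ≤ N) :
    ∑ i ∈ Finset.range (N + 1), (-1 : ℝ) ^ i * ((x + i).choose x : ℝ) * (X.choose (x + i) : ℝ)
      = if X = x then 1 else 0 := by
  rcases lt_or_ge X x with hx | hx
  · rw [if_neg hx.ne]
    apply Finset.sum_eq_zero
    intro i _
    rw [Nat.choose_eq_zero_of_lt (by omega : X < x + i)]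
    simp
  · have h1 : ∀ i ∈ Finset.range (N + 1),
        (-1 : ℝ) ^ i * ((x + i).choose x : ℝ) * (X.choose (x + i) : ℝ) =
        (X.choose x : ℝ) * ((-1) ^ i * ((X - x).choose i : ℝ)) := by
      intro i _
      have := Nat.choose_mul (n := X) (Nat.le_add_right x i)
      rw [Nat.add_sub_cancel_left] at this
      have h2 : (X.choose (x + i) : ℝ) * ((x + i).choose x : ℝ) =
        X.choose x * (X - x).choose i := by exact_mod_cast this
      linear_combination (-1 : ℝ) ^ i * h2
    rw [Finset.sum_congr rfl h1, ← Finset.mul_sum]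
    have h3 : ∑ i ∈ Finset.range (N + 1), (-1 : ℝ) ^ i * ((X - x).choose i : ℝ) =
        ∑ i ∈ Finset.range (X - x + 1), (-1 : ℝ) ^ i * ((X - x).choose i : ℝ) := by
      symm
      apply Finset.sum_subset
      · intro i hi
        rw [Finset.mem_range] at hi ⊢
        omega
      · intro i _ hi
        rw [Finset.mem_range, not_lt] at hi
        rw [Nat.choose_eq_zero_of_lt (by omega)]
        simp
    have h4 : ∑ i ∈ Finset.range (X - x + 1), (-1 : ℝ) ^ i * ((X - x).choose i : ℝ) =
        if X - x = 0 then 1 else 0 := by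
      have := Int.alternating_sum_range_choose (n := X - x)
      exact_mod_cast this
    rw [h3, h4]
    by_cases hX : X = x
    · subst hX; simp
    · rw [if_neg (by omega), if_neg hX, mul_zero]

/-- The (signed) series for the joint probability of exactly `x` top fixed points and a tail of
length at least `t`. -/
noncomputable def serB (n k t x : ℕ) : ℝ :=
  ∑' i : ℕ, (-1 : ℝ) ^ i * ((x + i).choose x : ℝ) * momA n k t (x + i)

lemma serB_eq {n k t : ℕ} (hk : k ≤ n) (ht : t ≤ n) (x : ℕ) :
    unifExpect (fun σ : Equiv.Perm (Fin n) =>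
      if maxFirst n k σ ≤ n - t ∧ fixedFirst n k σ = x then (1 : ℝ) else 0) = serB n k t x := by
  unfold serB
  rw [tsum_eq_sum (s := Finset.range (n + 1))]
  · rw [Finset.sum_congr rfl fun i _ => by rw [← momA_eq hk ht (x + i)]]
    unfold unifExpect
    simp only [mul_div_assoc']
    rw [← Finset.sum_div]
    congr 1
    simp only [Finset.mul_sum]
    rw [Finset.sum_comm]
    apply Finset.sum_congr rfl
    intro σ _
    have hX : fixedFirst n k σ ≤ n := (Finset.card_le_univ _).trans (by simp)
    by_cases h : maxFirst n k σ ≤ n - t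
    · simp only [h, true_and, if_true]
      rw [indicator_choose _ x n hX]
    · simp [h]
  · intro i hi
    rw [Finset.mem_range, not_lt] at hi
    unfold momA
    rw [Nat.descFactorial_of_lt (by omega : k < x + i)]
    simp

lemma unifExpect_sub {α : Type*} [Fintype α] (f g : α → ℝ) :
    unifExpect f - unifExpect g = unifExpect fun x => f x - g x := by
  unfold unifExpect
  rw [Finset.sum_sub_distrib, sub_div]

lemma unifExpect_sum {α ι : Type*} [Fintype α] (s : Finset ι) (f : ι → α → ℝ) :
    ∑ i ∈ s, unifExpect (f i) = unifExpect fun x => ∑ i ∈ s, f i x := by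
  unfold unifExpect
  rw [Finset.sum_comm, Finset.sum_div]

lemma topStat_prob {n k ℓ : ℕ} (hk : k ≤ n) (hℓ : ℓ + 1 ≤ n) :
    unifProb (fun σ : Equiv.Perm (Fin n) => topStat n k σ = ℓ) =
      ∑ t ∈ Finset.range (ℓ + 1), (serB n k t (ℓ - t) - serB n k (t + 1) (ℓ - t)) := by
  have h0 : ∀ t ∈ Finset.range (ℓ + 1),
      serB n k t (ℓ - t) - serB n k (t + 1) (ℓ - t) =
      unifExpect fun σ : Equiv.Perm (Fin n) =>
      ((if maxFirst n k σ ≤ n - t ∧ fixedFirst n k σ = ℓ - t then (1 : ℝ) else 0) -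
        (if maxFirst n k σ ≤ n - (t + 1) ∧ fixedFirst n k σ = ℓ - t then (1 : ℝ) else 0)) := by
    intro t ht
    rw [Finset.mem_range] at ht
    rw [← serB_eq hk (by omega), ← serB_eq hk (by omega), unifExpect_sub]
  rw [Finset.sum_congr rfl h0, unifExpect_sum, unifProb_eq_expect]
  congr 1
  funext σ
  have hM : maxFirst n k σ ≤ n := (maxFirst_le_iff σ n).2 (fun i _ => (σ i).isLt)
  unfold topStat
  have h1 : ∀ t ∈ Finset.range (ℓ + 1),
      ((if maxFirst n k σ ≤ n - t ∧ fixedFirst n k σ = ℓ - t then (1 : ℝ) else 0) -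
        (if maxFirst n k σ ≤ n - (t + 1) ∧ fixedFirst n k σ = ℓ - t then (1 : ℝ) else 0)) =
      if n - maxFirst n k σ = t then
        (if fixedFirst n k σ + (n - maxFirst n k σ) = ℓ then (1 : ℝ) else 0) else 0 := by
    intro t ht
    rw [Finset.mem_range] at ht
    generalize maxFirst n k σ = M at *
    generalize fixedFirst n k σ = X at *
    split_ifs <;> first | omega | norm_num
  rw [Finset.sum_congr rfl h1, Finset.sum_ite_eq]
  split_ifs with h2 h3 h3
  · rfl
  · rw [Finset.mem_range] at h3; omega
  · rfl
  · rfl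

lemma tendsto_descFactorial_div {α : Type*} {𝓕 : Filter α} (u v : α → ℕ) (a : ℝ)
    (hv : Tendsto v 𝓕 atTop) (h : Tendsto (fun x => (u x : ℝ) / (v x : ℝ)) 𝓕 (𝓝 a)) (j : ℕ) :
    Tendsto (fun x => ((u x).descFactorial j : ℝ) / (v x : ℝ) ^ j) 𝓕 (𝓝 (a ^ j)) := by
  have hv' : Tendsto (fun x => (v x : ℝ)) 𝓕 atTop := tendsto_natCast_atTop_atTop.comp hv
  have ha : 0 ≤ a ∨ 𝓕 = ⊥ := by
    rcases 𝓕.eq_or_neBot with h0 | h0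
    · exact Or.inr h0
    · exact Or.inl (ge_of_tendsto' h fun x => by positivity)
  rcases ha with ha | rfl
  swap
  · simp
  induction j with
  | zero => simpa using tendsto_const_nhds
  | succ j ih =>
    have h1 : Tendsto (fun x => ((u x - j : ℕ) : ℝ) / (v x : ℝ)) 𝓕 (𝓝 a) := by
      have h2 : Tendsto (fun x => (j : ℝ) / (v x : ℝ)) 𝓕 (𝓝 0) := hv'.const_div_atTop _
      have h3 := h.sub h2
      rw [sub_zero] at h3
      refine tendsto_of_tendsto_of_tendsto_of_le_of_le h3 h (fun x => ?_) (fun x => ?_)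
      · show (u x : ℝ) / (v x : ℝ) - (j : ℝ) / (v x : ℝ) ≤ ((u x - j : ℕ) : ℝ) / (v x : ℝ)
        rw [← sub_div]
        apply div_le_div_of_nonneg_right _ (by positivity)
        have : u x ≤ (u x - j) + j := by omega
        have h' : (u x : ℝ) ≤ ((u x - j : ℕ) : ℝ) + j := by exact_mod_cast this
        linarith
      · show ((u x - j : ℕ) : ℝ) / (v x : ℝ) ≤ (u x : ℝ) / (v x : ℝ)
        apply div_le_div_of_nonneg_right _ (by positivity)
        exact_mod_cast Nat.sub_le _ _
    have := h1.mul ih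
    rw [pow_succ']
    refine this.congr fun x => ?_
    rw [Nat.descFactorial_succ, Nat.cast_mul, pow_succ', mul_div_mul_comm]

lemma tendsto_momA {α : Type*} {𝓕 : Filter α} (n k : α → ℕ) (p : ℝ)
    (hn : Tendsto n 𝓕 atTop) (hk : ∀ᶠ x in 𝓕, k x ≤ n x)
    (h : Tendsto (fun x => (k x : ℝ) / (n x : ℝ)) 𝓕 (𝓝 p)) (t j : ℕ) :
    Tendsto (fun x => momA (n x) (k x) t j) 𝓕 (𝓝 (p ^ j * (1 - p) ^ t / (j.factorial : ℝ))) := by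
  have hne : ∀ᶠ x in 𝓕, n x ≠ 0 := hn.eventually_ne_atTop 0
  have h1 := tendsto_descFactorial_div k n p hn h j
  have h2 := tendsto_descFactorial_div (fun x => n x - k x) n (1 - p) hn (by
    refine (tendsto_const_nhds.sub h).congr' ?_
    filter_upwards [hk, hne] with x hx hx'
    have : (n x : ℝ) ≠ 0 := by exact_mod_cast hx'
    rw [Nat.cast_sub hx, sub_div, div_self this]) t
  have h3 := tendsto_descFactorial_div n n 1 hn (by
    refine tendsto_const_nhds.congr' ?_
    filter_upwards [hne] with x hx'
    have : (n x : ℝ) ≠ 0 := by exact_mod_cast hx'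
    rw [div_self this]) (j + t)
  have h4 := ((h1.mul h2).div h3 (by simp)).div_const (j.factorial : ℝ)
  rw [one_pow, div_one] at h4
  refine h4.congr' ?_
  filter_upwards [hne] with x hx'
  have : (n x : ℝ) ≠ 0 := by exact_mod_cast hx'
  unfold momA
  simp only [Pi.div_apply]
  congr 1
  rw [div_mul_div_comm, ← pow_add, div_div_div_cancel_right₀ (pow_ne_zero _ this)]

lemma choose_mul_inv_factorial (x i : ℕ) :
    ((x + i).choose x : ℝ) * (1 / ((x + i).factorial : ℝ)) =
      1 / ((x.factorial : ℝ) * (i.factorial : ℝ)) := by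
  have h1 : ((x + i).factorial : ℝ) = (x + i).choose x * x.factorial * i.factorial := by
    rw [Nat.choose_symm_add]
    exact_mod_cast (Nat.add_choose_mul_factorial_mul_factorial x i).symm
  have h2 : ((x + i).factorial : ℝ) ≠ 0 := by exact_mod_cast Nat.factorial_ne_zero _
  have h3 : (x.factorial : ℝ) ≠ 0 := by exact_mod_cast Nat.factorial_ne_zero _
  have h4 : (i.factorial : ℝ) ≠ 0 := by exact_mod_cast Nat.factorial_ne_zero _
  rw [mul_one_div, div_eq_div_iff h2 (mul_ne_zero h3 h4), h1]
  ring

lemma tendsto_serB {α : Type*} {𝓕 : Filter α} (n k : α → ℕ) (p : ℝ)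
    (hn : Tendsto n 𝓕 atTop) (hk : ∀ᶠ x in 𝓕, k x ≤ n x)
    (h : Tendsto (fun x => (k x : ℝ) / (n x : ℝ)) 𝓕 (𝓝 p)) (t x : ℕ) :
    Tendsto (fun y => serB (n y) (k y) t x) 𝓕
      (𝓝 ((1 - p) ^ t * (Real.exp (-p) * p ^ x / (x.factorial : ℝ)))) := by
  have hexp : HasSum (fun i : ℕ => (-p) ^ i / (i.factorial : ℝ)) (Real.exp (-p)) := by
    rw [Real.exp_eq_exp_ℝ]
    exact NormedSpace.expSeries_div_hasSum_exp (-p)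
  have hval : (1 - p) ^ t * (Real.exp (-p) * p ^ x / (x.factorial : ℝ)) =
      ∑' i : ℕ, (-1 : ℝ) ^ i * ((x + i).choose x : ℝ) *
        (p ^ (x + i) * (1 - p) ^ t / ((x + i).factorial : ℝ)) := by
    symm
    have h5 := hexp.mul_left ((1 - p) ^ t * p ^ x / (x.factorial : ℝ))
    have h6 : (1 - p) ^ t * p ^ x / (x.factorial : ℝ) * Real.exp (-p) =
      (1 - p) ^ t * (Real.exp (-p) * p ^ x / (x.factorial : ℝ)) := by ring
    rw [h6] at h5
    rw [← h5.tsum_eq]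
    apply tsum_congr
    intro i
    have := choose_mul_inv_factorial x i
    rw [neg_pow p i, pow_add]
    calc _ = (-1 : ℝ) ^ i * (p ^ x * p ^ i * (1 - p) ^ t) *
          (((x + i).choose x : ℝ) * (1 / ((x + i).factorial : ℝ))) := by ring
      _ = _ := by rw [this, one_div, mul_inv]; ring
  rw [hval]
  unfold serB
  apply tendsto_tsum_of_dominated_convergence (bound := fun i : ℕ => (1 : ℝ) ^ i / i.factorial)
  · exact Real.summable_pow_div_factorial 1
  · intro i
    exact (tendsto_momA n k p hn hk h t (x + i)).const_mul _
  · filter_upwards [hk] with y hy i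
    rw [norm_mul, norm_mul, norm_pow, norm_neg, norm_one, one_pow, one_mul, Real.norm_natCast,
      Real.norm_of_nonneg (momA_nonneg _ _ _ _)]
    calc _ ≤ ((x + i).choose x : ℝ) * (1 / ((x + i).factorial : ℝ)) := by
          gcongr; exact momA_le hy _ _
      _ = 1 / ((x.factorial : ℝ) * (i.factorial : ℝ)) := choose_mul_inv_factorial x i
      _ ≤ 1 / (i.factorial : ℝ) := by
          have h3 : (1 : ℝ) ≤ (x.factorial : ℝ) := by exact_mod_cast Nat.factorial_pos x
          have h4 : (0 : ℝ) < (i.factorial : ℝ) := by exact_mod_cast Nat.factorial_pos i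
          apply one_div_le_one_div_of_le h4
          nlinarith

/-- The limiting probability. -/
noncomputable def limG (p : ℝ) (ℓ : ℕ) : ℝ :=
  ∑ t ∈ Finset.range (ℓ + 1), p * (1 - p) ^ t *
    (Real.exp (-p) * p ^ (ℓ - t) / ((ℓ - t).factorial : ℝ))

lemma tendsto_topStat {α : Type*} {𝓕 : Filter α} (n k : α → ℕ) (p : ℝ)
    (hn : Tendsto n 𝓕 atTop) (hk : ∀ᶠ x in 𝓕, k x ≤ n x)
    (h : Tendsto (fun x => (k x : ℝ) / (n x : ℝ)) 𝓕 (𝓝 p)) (ℓ : ℕ) :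
    Tendsto (fun y => unifProb (fun σ : Equiv.Perm (Fin (n y)) => topStat (n y) (k y) σ = ℓ)) 𝓕
      (𝓝 (limG p ℓ)) := by
  have h1 : Tendsto (fun y => ∑ t ∈ Finset.range (ℓ + 1),
      (serB (n y) (k y) t (ℓ - t) - serB (n y) (k y) (t + 1) (ℓ - t))) 𝓕 (𝓝 (limG p ℓ)) := by
    unfold limG
    apply tendsto_finsetSum
    intro t _
    have := (tendsto_serB n k p hn hk h t (ℓ - t)).sub
      (tendsto_serB n k p hn hk h (t + 1) (ℓ - t))
    convert this using 2
    ring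
  refine h1.congr' ?_
  filter_upwards [hk, hn.eventually_ge_atTop (ℓ + 1)] with y hy hy'
  rw [topStat_prob hy hy']

lemma card_avoid {n r : ℕ} (A : Finset (Fin n)) :
    (Finset.univ.filter fun s : Fin r → Fin n => ∀ a, s a ∉ A).card = (n - A.card) ^ r := by
  have : (Finset.univ.filter fun s : Fin r → Fin n => ∀ a, s a ∉ A) =
      Fintype.piFinset fun _ : Fin r => Aᶜ := by
    ext s; simp
  rw [this, Fintype.card_piFinset]
  simp [Finset.card_compl]

lemma missing_eq {n r : ℕ} (s : Fin r → Fin n) :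
    (n : ℝ) - distinctCount n r s = ∑ i : Fin n, if (∀ a, s a ≠ i) then (1 : ℝ) else 0 := by
  rw [Finset.sum_boole]
  have h : (Finset.univ.filter fun i : Fin n => ∀ a, s a ≠ i) = (Finset.univ.image s)ᶜ := by
    ext i; simp
  rw [h, Finset.card_compl, Fintype.card_fin, Nat.cast_sub]
  · rfl
  · exact distinctCount_le s

lemma sum_missing {n r : ℕ} (hn : 1 ≤ n) :
    ∑ s : Fin r → Fin n, ((n : ℝ) - distinctCount n r s) = n * ((n : ℝ) - 1) ^ r := by
  simp only [missing_eq]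
  rw [Finset.sum_comm]
  have h : ∀ i : Fin n, ∑ s : Fin r → Fin n, (if (∀ a, s a ≠ i) then (1 : ℝ) else 0) =
      ((n : ℝ) - 1) ^ r := by
    intro i
    rw [Finset.sum_boole]
    have := card_avoid (r := r) {i}
    simp only [Finset.mem_singleton, Finset.card_singleton] at this
    simp only [ne_eq]
    rw [this]
    push_cast [Nat.cast_sub hn]
    rfl
  rw [Finset.sum_congr rfl fun i _ => h i]
  simp

lemma sum_missing_sq {n r : ℕ} (hn : 2 ≤ n) :
    ∑ s : Fin r → Fin n, ((n : ℝ) - distinctCount n r s) ^ 2 =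
      n * ((n : ℝ) - 1) ^ r + n * ((n : ℝ) - 1) * ((n : ℝ) - 2) ^ r := by
  simp only [missing_eq, sq, Finset.sum_mul_sum]
  rw [Finset.sum_comm]
  have h : ∀ i j : Fin n, ∑ s : Fin r → Fin n, (if (∀ a, s a ≠ i) then (1 : ℝ) else 0) *
      (if (∀ a, s a ≠ j) then (1 : ℝ) else 0) =
      if j = i then ((n : ℝ) - 1) ^ r else ((n : ℝ) - 2) ^ r := by
    intro i j
    have h1 : ∀ s : Fin r → Fin n, (if (∀ a, s a ≠ i) then (1 : ℝ) else 0) *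
      (if (∀ a, s a ≠ j) then (1 : ℝ) else 0) =
      if (∀ a, s a ∉ ({i, j} : Finset (Fin n))) then (1 : ℝ) else 0 := by
      intro s
      have hiff : (∀ a, s a ∉ ({i, j} : Finset (Fin n))) ↔
          (∀ a, s a ≠ i) ∧ ∀ a, s a ≠ j := by
        simp [forall_and]
      simp only [hiff]
      by_cases h1 : ∀ a, s a ≠ i <;> by_cases h2 : ∀ a, s a ≠ j <;> simp [h1, h2]
    simp only [h1]
    rw [Finset.sum_boole, card_avoid]
    split_ifs with hij
    · subst hij
      simp only [Finset.pair_eq_singleton, Finset.card_singleton]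
      push_cast [Nat.cast_sub (by omega : 1 ≤ n)]
      rfl
    · rw [Finset.card_pair (Ne.symm hij)]
      push_cast [Nat.cast_sub hn]
      rfl
  have h2 : ∀ i : Fin n, ∑ s : Fin r → Fin n, ∑ j : Fin n,
      (if (∀ a, s a ≠ i) then (1 : ℝ) else 0) * (if (∀ a, s a ≠ j) then (1 : ℝ) else 0) =
      ((n : ℝ) - 1) ^ r + ((n : ℝ) - 1) * ((n : ℝ) - 2) ^ r := by
    intro i
    rw [Finset.sum_comm]
    simp only [h]
    rw [← Finset.add_sum_erase _ _ (Finset.mem_univ i), if_pos rfl]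
    congr 1
    rw [Finset.sum_congr rfl fun j hj => if_neg (Finset.ne_of_mem_erase hj), Finset.sum_const,
      Finset.card_erase_of_mem (Finset.mem_univ i), Finset.card_univ, Fintype.card_fin,
      nsmul_eq_mul, Nat.cast_sub (by omega : 1 ≤ n)]
    simp
  rw [Finset.sum_congr rfl fun i _ => h2 i]
  simp
  ring

lemma expect_sq {n r : ℕ} (hn : 2 ≤ n) (q : ℝ) :
    unifExpect (fun s : Fin r → Fin n => ((distinctCount n r s : ℝ) / n - (1 - q)) ^ 2) =
      (1 - 1 / (n : ℝ)) ^ r / n + (1 - 1 / (n : ℝ)) * (1 - 2 / (n : ℝ)) ^ r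
        - 2 * q * (1 - 1 / (n : ℝ)) ^ r + q ^ 2 := by
  have hn0 : (n : ℝ) ≠ 0 := by
    have : n ≠ 0 := by omega
    exact_mod_cast this
  have h1 : ∀ s : Fin r → Fin n, ((distinctCount n r s : ℝ) / n - (1 - q)) ^ 2 =
      ((n : ℝ) - distinctCount n r s) ^ 2 * (1 / (n : ℝ) ^ 2)
        - ((n : ℝ) - distinctCount n r s) * (2 * q / n) + q ^ 2 := by
    intro s
    field_simp
    ring
  unfold unifExpect
  simp only [h1]
  rw [Finset.sum_add_distrib, Finset.sum_sub_distrib, ← Finset.sum_mul, ← Finset.sum_mul,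
    sum_missing (by omega), sum_missing_sq hn]
  simp only [Finset.sum_const, Finset.card_univ, Fintype.card_fun, Fintype.card_fin,
    nsmul_eq_mul, Nat.cast_pow]
  have e1 : (1 - 1 / (n : ℝ)) ^ r = ((n : ℝ) - 1) ^ r / (n : ℝ) ^ r := by
    rw [← div_pow]; congr 1; field_simp
  have e2 : (1 - 2 / (n : ℝ)) ^ r = ((n : ℝ) - 2) ^ r / (n : ℝ) ^ r := by
    rw [← div_pow]; congr 1; field_simp
  rw [e1, e2]
  have : (n : ℝ) ^ r ≠ 0 := pow_ne_zero _ hn0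
  field_simp

lemma tendsto_pow_floor (c : ℝ) (hc : 0 < c) (x : ℝ) :
    Tendsto (fun n : ℕ => (1 - x / (n : ℝ)) ^ ⌊c * (n : ℝ)⌋₊) atTop (𝓝 (Real.exp (-c * x))) := by
  have h1 : Tendsto (fun n : ℕ => (n : ℝ) * Real.log (1 + (-x) / (n : ℝ))) atTop (𝓝 (-x)) :=
    (Real.tendsto_mul_log_one_add_div_atTop (-x)).comp tendsto_natCast_atTop_atTop
  have h2 : Tendsto (fun n : ℕ => (⌊c * (n : ℝ)⌋₊ : ℝ) / (n : ℝ)) atTop (𝓝 c) :=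
    (tendsto_nat_floor_mul_div_atTop hc.le).comp tendsto_natCast_atTop_atTop
  have h3 := (Real.continuous_exp.tendsto _).comp (h2.mul h1)
  have e : c * -x = -c * x := by ring
  rw [e] at h3
  refine h3.congr' ?_
  have h4 : Tendsto (fun n : ℕ => 1 + (-x) / (n : ℝ)) atTop (𝓝 (1 + 0)) :=
    tendsto_const_nhds.add (tendsto_natCast_atTop_atTop.const_div_atTop _)
  filter_upwards [h4.eventually_const_lt (by norm_num : (0 : ℝ) < 1 + 0), eventually_ne_atTop 0]
    with n hn hn0
  have hn0' : (n : ℝ) ≠ 0 := by exact_mod_cast hn0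
  simp only [Function.comp_apply]
  have e2 : (⌊c * (n : ℝ)⌋₊ : ℝ) / (n : ℝ) * ((n : ℝ) * Real.log (1 + (-x) / (n : ℝ))) =
    (⌊c * (n : ℝ)⌋₊ : ℝ) * Real.log (1 + (-x) / (n : ℝ)) := by field_simp
  rw [e2, Real.exp_nat_mul, Real.exp_log hn]
  congr 1
  ring

lemma tendsto_expect_sq (c : ℝ) (hc : 0 < c) :
    Tendsto (fun n : ℕ => unifExpect (fun s : Fin ⌊c * (n : ℝ)⌋₊ → Fin n =>
      ((distinctCount n ⌊c * (n : ℝ)⌋₊ s : ℝ) / n - (1 - Real.exp (-c))) ^ 2)) atTop (𝓝 0) := by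
  have h1 := tendsto_pow_floor c hc 1
  have h2 := tendsto_pow_floor c hc 2
  have h0 : Tendsto (fun n : ℕ => 1 / (n : ℝ)) atTop (𝓝 0) :=
    tendsto_natCast_atTop_atTop.const_div_atTop _
  have h3 := (((h1.mul h0).add (((tendsto_const_nhds (x := (1 : ℝ))).sub h0).mul h2)).sub
    (h1.const_mul (2 * Real.exp (-c)))).add (tendsto_const_nhds (x := Real.exp (-c) ^ 2))
  have e : Real.exp (-c * 1) * 0 + (1 - 0) * Real.exp (-c * 2) -
      2 * Real.exp (-c) * Real.exp (-c * 1) + Real.exp (-c) ^ 2 = 0 := by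
    have : Real.exp (-c * 2) = Real.exp (-c) ^ 2 := by
      rw [← Real.exp_nat_mul]; congr 1; push_cast; ring
    rw [this, mul_one]; ring
  rw [e] at h3
  refine h3.congr' ?_
  filter_upwards [eventually_ge_atTop 2] with n hn
  rw [expect_sq hn, mul_one_div]

lemma unifProb_mem {α : Type*} [Fintype α] (p : α → Prop) :
    0 ≤ unifProb p ∧ unifProb p ≤ 1 := by
  classical
  unfold unifProb
  refine ⟨by positivity, div_le_one_of_le₀ ?_ (by positivity)⟩
  rw [Nat.card_eq_fintype_card]
  exact_mod_cast Fintype.card_subtype_le p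

lemma unifExpect_abs_le {α : Type*} [Fintype α] [Nonempty α] (f g : α → ℝ) (G ε C : ℝ)
    (h : ∀ x, |f x - G| ≤ ε + C * g x) :
    |unifExpect f - G| ≤ ε + C * unifExpect g := by
  have hc : (0 : ℝ) < Fintype.card α := by exact_mod_cast Fintype.card_pos
  have h1 : unifExpect f - G = (∑ x, (f x - G)) / Fintype.card α := by
    unfold unifExpect
    rw [Finset.sum_sub_distrib, Finset.sum_const, Finset.card_univ, nsmul_eq_mul]
    field_simp
  have h2 : ε + C * unifExpect g = (∑ x, (ε + C * g x)) / Fintype.card α := by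
    unfold unifExpect
    rw [Finset.sum_add_distrib, ← Finset.mul_sum, Finset.sum_const, Finset.card_univ,
      nsmul_eq_mul]
    field_simp
  rw [h1, h2, abs_div, abs_of_pos hc]
  gcongr
  exact (Finset.abs_sum_le_sum_abs _ _).trans (Finset.sum_le_sum fun x _ => h x)

lemma topStat_uniform (p : ℝ) (ℓ : ℕ) (ε : ℝ) (hε : 0 < ε) :
    ∃ δ > 0, ∃ N : ℕ, ∀ n ≥ N, ∀ k ≤ n, |(k : ℝ) / n - p| < δ →
      |unifProb (fun σ : Equiv.Perm (Fin n) => topStat n k σ = ℓ) - limG p ℓ| < ε := by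
  let 𝓕 : Filter (ℕ × ℕ) := (comap Prod.fst atTop ⊓
    comap (fun x : ℕ × ℕ => (x.2 : ℝ) / (x.1 : ℝ)) (𝓝 p)) ⊓ 𝓟 {x | x.2 ≤ x.1}
  have h := tendsto_topStat (𝓕 := 𝓕) Prod.fst Prod.snd p
    (tendsto_comap.mono_left (inf_le_left.trans inf_le_left))
    (mem_inf_of_right (mem_principal_self _))
    (tendsto_comap.mono_left (inf_le_left.trans inf_le_right)) ℓ
  have h1 := h.eventually (Metric.ball_mem_nhds _ hε)
  have hb : 𝓕.HasBasis (fun i : ℕ × ℝ => True ∧ 0 < i.2) (fun i =>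
      (Prod.fst ⁻¹' Set.Ici i.1 ∩
        (fun x : ℕ × ℕ => (x.2 : ℝ) / (x.1 : ℝ)) ⁻¹' Metric.ball p i.2) ∩ {x | x.2 ≤ x.1}) :=
    ((atTop_basis.comap _).inf (Metric.nhds_basis_ball.comap _)).inf_principal _
  obtain ⟨⟨N, δ⟩, ⟨-, hδ⟩, hsub⟩ := hb.mem_iff.1 h1
  refine ⟨δ, hδ, N, fun n hn k hk hkp => ?_⟩
  have := @hsub (n, k) ⟨⟨hn, by simpa [Real.dist_eq] using hkp⟩, hk⟩
  simpa [Real.dist_eq] using this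

lemma rtt_limit (c : ℝ) (hc : 0 < c) (ℓ : ℕ) :
    Tendsto
      (fun n : ℕ =>
        unifProb (fun s : Fin ⌊c * (n : ℝ)⌋₊ → Fin n =>
          fixedPointCount (rttPerm n ⌊c * (n : ℝ)⌋₊ s) = ℓ))
      atTop (𝓝 (limG (1 - Real.exp (-c)) ℓ)) := by
  set p := 1 - Real.exp (-c) with hp
  rw [Metric.tendsto_atTop']
  intro ε hε
  obtain ⟨δ, hδ, N, hN⟩ := topStat_uniform p ℓ (ε / 2) (by positivity)
  set C := (1 + |limG p ℓ|) / δ ^ 2 with hC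
  have hlim := (tendsto_expect_sq c hc).const_mul C
  rw [mul_zero] at hlim
  have hev := hlim.eventually_lt_const (by positivity : (0 : ℝ) < ε / 2)
  obtain ⟨N', hN'⟩ := eventually_atTop.1 hev
  refine ⟨max N (max N' 1), fun n hn => ?_⟩
  have hn1 : N ≤ n := by omega
  have hn2 : N' ≤ n := by omega
  have hn3 : 0 < n := by omega
  have : Nonempty (Fin n) := ⟨⟨0, hn3⟩⟩
  rw [Real.dist_eq, unifProb_rtt]
  refine lt_of_le_of_lt (unifExpect_abs_le _ (fun s : Fin ⌊c * (n : ℝ)⌋₊ → Fin n =>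
      ((distinctCount n ⌊c * (n : ℝ)⌋₊ s : ℝ) / n - p) ^ 2) _ (ε / 2) C ?_) ?_
  · intro s
    rcases lt_or_ge |(distinctCount n ⌊c * (n : ℝ)⌋₊ s : ℝ) / n - p| δ with h | h
    · have h1 := hN n hn1 _ (distinctCount_le s) h
      have h2 : 0 ≤ C * ((distinctCount n ⌊c * (n : ℝ)⌋₊ s : ℝ) / n - p) ^ 2 := by positivity
      linarith
    · have h1 := unifProb_mem (fun σ : Equiv.Perm (Fin n) =>
        topStat n (distinctCount n ⌊c * (n : ℝ)⌋₊ s) σ = ℓ)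
      have h2 : |unifProb (fun σ : Equiv.Perm (Fin n) =>
        topStat n (distinctCount n ⌊c * (n : ℝ)⌋₊ s) σ = ℓ) - limG p ℓ| ≤ 1 + |limG p ℓ| := by
        refine (abs_sub _ _).trans ?_
        rw [abs_of_nonneg h1.1]
        linarith [h1.2]
      have h3 : δ ^ 2 ≤ ((distinctCount n ⌊c * (n : ℝ)⌋₊ s : ℝ) / n - p) ^ 2 := by
        rw [← sq_abs (_ - p)]
        gcongr
      have h4 : 1 + |limG p ℓ| ≤ C * ((distinctCount n ⌊c * (n : ℝ)⌋₊ s : ℝ) / n - p) ^ 2 := by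
        rw [hC, div_mul_eq_mul_div, le_div_iff₀ (by positivity)]
        gcongr
      linarith
  · have := hN' n hn2
    linarith

/-- **Theorem (fixed points, critical regime).** For `c > 0` and `r = ⌊cn⌋` iterated
random-to-top shuffles of an `n`-card deck started at the identity, the number of fixed
points converges in distribution to `X + Y` with `X ~ Poisson(1 - e⁻ᶜ)` and `Y` geometric
with `P(Y = k) = (1 - e⁻ᶜ) e^{-ck}`, independent; equivalently, the pmf converges pointwise
to that of the convolution. -/
theorem rtt_fixedPoints_critical (c : ℝ) (hc : 0 < c) (ℓ : ℕ) :
    Tendsto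
      (fun n : ℕ =>
        unifProb (fun s : Fin ⌊c * (n : ℝ)⌋₊ → Fin n =>
          fixedPointCount (rttPerm n ⌊c * (n : ℝ)⌋₊ s) = ℓ))
      atTop
      (𝓝 (∑ j ∈ Finset.range (ℓ + 1),
        (1 - Real.exp (-c)) * Real.exp (-c * j) *
          (Real.exp (-(1 - Real.exp (-c))) * (1 - Real.exp (-c)) ^ (ℓ - j) /
            (Nat.factorial (ℓ - j) : ℝ)))) := by
  have h := rtt_limit c hc ℓ
  have e : limG (1 - Real.exp (-c)) ℓ = ∑ j ∈ Finset.range (ℓ + 1),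
        (1 - Real.exp (-c)) * Real.exp (-c * j) *
          (Real.exp (-(1 - Real.exp (-c))) * (1 - Real.exp (-c)) ^ (ℓ - j) /
            (Nat.factorial (ℓ - j) : ℝ)) := by
    unfold limG
    refine Finset.sum_congr rfl fun j _ => ?_
    have h1 : (1 - (1 - Real.exp (-c))) ^ j = Real.exp (-c * j) := by
      rw [sub_sub_cancel, ← Real.exp_nat_mul, mul_comm]
    rw [h1]
  rw [← e]
  exact h
end

section
/- Let (r_n) be a sequence of positive integers with r_n / n → ∞ as n → ∞. For each n, let F^{r_n}_n be the number of fixed points of the random permutation of [n] obtained by performing r_n iterated random-to-top shuffles starting from the identity. Then F^{r_n}_n converges in distribution, as n → ∞, to a Poisson random variable with mean 1; that is, for every integer ℓ ≥ 0, P(F^{r_n}_n = ℓ) → e^{−1}/ℓ!. -/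
open MeasureTheory ProbabilityTheory Filter Finset Topology
open scoped NNReal

namespace RTT

def perm {n : ℕ} (l : List (Fin n)) : Equiv.Perm (Fin n) :=
  l.foldl (fun π c => moveToTop c π) 1

def pos {n : ℕ} (l : List (Fin n)) (d : Fin n) : ℕ := ((perm l)⁻¹ d : Fin n)

lemma pos_nil {n : ℕ} (d : Fin n) : pos [] d = d := by simp [pos, perm]

lemma pos_inj {n : ℕ} (l : List (Fin n)) {d e : Fin n} (h : pos l d = pos l e) : d = e :=
  (perm l)⁻¹.injective (Fin.ext h)

lemma cycle_val {n : ℕ} (i j : Fin n) :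
    ((i.cycleRange j : Fin n) : ℕ) = if (j : ℕ) < i then (j : ℕ) + 1 else
      if (j : ℕ) = i then 0 else j := by
  have : NeZero n := ⟨by have := i.2; omega⟩
  split_ifs with h1 h2
  · exact Fin.coe_cycleRange_of_lt h1
  · have : j = i := Fin.ext h2
    subst this
    simp
  · rw [Fin.cycleRange_of_gt]
    exact lt_of_le_of_ne (not_lt.mp h1) (fun h => h2 (by rw [h]))

lemma pos_append {n : ℕ} (l : List (Fin n)) (c d : Fin n) :
    pos (l ++ [c]) d = if pos l d < pos l c then pos l d + 1 else
      if pos l d = pos l c then 0 else pos l d := by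
  unfold pos
  rw [← cycle_val]
  simp [perm, moveToTop, mul_inv_rev]

lemma card_append {n : ℕ} (l : List (Fin n)) (c : Fin n) :
    (l ++ [c]).toFinset.card = if c ∈ l then l.toFinset.card else l.toFinset.card + 1 := by
  have : (l ++ [c]).toFinset = insert c l.toFinset := by ext; simp
  rw [this]
  split_ifs with h
  · rw [Finset.insert_eq_of_mem (by simpa using h)]
  · rw [Finset.card_insert_of_notMem (by simpa using h)]

lemma mem_iff {n : ℕ} (l : List (Fin n)) (d : Fin n) :
    d ∈ l ↔ pos l d < l.toFinset.card := by
  induction l using List.reverseRecOn generalizing d with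
  | nil => simp
  | append_singleton l c ih =>
    rw [pos_append, card_append, List.mem_append, List.mem_singleton]
    have h1 := ih d
    have h2 := ih c
    have h3 : d = c ↔ pos l d = pos l c := ⟨fun h => by rw [h], pos_inj l⟩
    rw [h1, h3]
    simp only [h2]
    split_ifs <;> omega

lemma mono {n : ℕ} (l : List (Fin n)) (d e : Fin n) (hd : d ∉ l) (he : e ∉ l) (h : d < e) :
    pos l d < pos l e := by
  induction l using List.reverseRecOn with
  | nil => simpa [pos_nil] using h
  | append_singleton l c ih =>
    simp only [List.mem_append, List.mem_singleton, not_or] at hd he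
    have := ih hd.1 he.1
    have h1 : pos l d ≠ pos l c := fun h => hd.2 (pos_inj l h)
    have h2 : pos l e ≠ pos l c := fun h => he.2 (pos_inj l h)
    rw [pos_append, pos_append]
    split_ifs <;> omega

lemma card_map {n : ℕ} (l : List (Fin n)) (σ : Equiv.Perm (Fin n)) :
    (l.map σ).toFinset.card = l.toFinset.card := by
  have : (l.map σ).toFinset = l.toFinset.map σ.toEmbedding := by
    ext a
    simp only [List.mem_toFinset, List.mem_map, Finset.mem_map, Equiv.coe_toEmbedding]
  rw [this, Finset.card_map]

lemma equivar {n : ℕ} (l : List (Fin n)) (σ : Equiv.Perm (Fin n)) (d : Fin n) (hd : d ∈ l) :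
    pos (l.map σ) (σ d) = pos l d := by
  induction l using List.reverseRecOn generalizing d with
  | nil => simp at hd
  | append_singleton l c ih =>
    rw [List.map_append, List.map_singleton, pos_append, pos_append]
    by_cases hc : c ∈ l
    · have hd' : d ∈ l := by
        simp only [List.mem_append, List.mem_singleton] at hd
        rcases hd with h | h
        · exact h
        · exact h ▸ hc
      rw [ih d hd', ih c hc]
    · by_cases hdc : d = c
      · subst hdc; simp
      · have hd' : d ∈ l := by
          simp only [List.mem_append, List.mem_singleton] at hd
          exact hd.resolve_right hdc
        rw [ih d hd']
        have h1 := (mem_iff l d).1 hd'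
        have h2 := (mem_iff l c).not.1 hc
        have h3 := (mem_iff (l.map σ) (σ c)).not.1 (by simpa using hc)
        rw [card_map] at h3
        rw [if_pos (by omega), if_pos (by omega)]

/-- fixed points in the bottom part force the last card to be unselected -/
lemma bottom {m : ℕ} (l : List (Fin (m+1))) (i : Fin (m+1)) (hi : perm l i = i)
    (hK : l.toFinset.card ≤ (i : ℕ)) : Fin.last m ∉ l := by
  have hp : ∀ j, pos l (perm l j) = j := fun j => by simp [pos]
  have hnm : ∀ j : Fin (m+1), l.toFinset.card ≤ (j : ℕ) → perm l j ∉ l := fun j hj h => by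
    have := (mem_iff l _).1 h
    rw [hp] at this
    omega
  have key : ∀ j : ℕ, (i : ℕ) ≤ j → ∀ hj : j < m + 1, j ≤ (perm l ⟨j, hj⟩ : ℕ) := by
    intro j hij
    induction j, hij using Nat.le_induction with
    | base => intro hj; simp [hi]
    | succ j hij ih =>
      intro hj
      have h0 := ih (by omega)
      have h1 := hnm ⟨j, by omega⟩ (by simp; omega)
      have h2 := hnm ⟨j+1, hj⟩ (by simp; omega)
      by_contra hlt
      have hne : perm l ⟨j+1, hj⟩ ≠ perm l ⟨j, by omega⟩ := fun h => by
        have := (perm l).injective h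
        simp at this
      have hlt' : perm l ⟨j+1, hj⟩ < perm l ⟨j, by omega⟩ := by
        refine lt_of_le_of_ne ?_ hne
        rw [Fin.le_def]; omega
      have := mono l _ _ h2 h1 hlt'
      rw [hp, hp] at this
      simp at this
  have h := key m (by have := i.2; omega) (by omega)
  have h2 : perm l (Fin.last m) = Fin.last m := by
    apply Fin.ext
    have := (perm l (Fin.last m)).2
    change m ≤ (perm l (Fin.last m) : ℕ) at h
    simp only [Fin.val_last]
    omega
  have := hnm (Fin.last m) (by have := i.2; simp; omega)
  rwa [h2] at this

lemma distinct_eq {n r : ℕ} (s : Fin r → Fin n) :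
    distinctCount n r s = (List.ofFn s).toFinset.card := by
  unfold distinctCount
  congr 1
  ext; simp [List.mem_ofFn]

/-- top fixed points -/
def top (n r : ℕ) (s : Fin r → Fin n) : ℕ := fixedFirst n (distinctCount n r s) (rttPerm n r s)

lemma top_comp {n r : ℕ} (s : Fin r → Fin n) (σ : Equiv.Perm (Fin n)) :
    top n r (σ ∘ s) = fixedFirst n (distinctCount n r s) (σ * rttPerm n r s) := by
  have hl : List.ofFn (σ ∘ s) = (List.ofFn s).map σ := by rw [List.map_ofFn]
  have hK : distinctCount n r (σ ∘ s) = distinctCount n r s := by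
    rw [distinct_eq, distinct_eq, hl, card_map]
  unfold top fixedFirst
  rw [hK]
  congr 1
  apply Finset.filter_congr
  intro i _
  refine and_congr_right fun hi => ?_
  have h1 : perm (List.ofFn s) i ∈ List.ofFn s := by
    rw [mem_iff, ← distinct_eq]; simpa [pos] using hi
  have h2 := equivar (List.ofFn s) σ _ h1
  have h3 : rttPerm n r (σ ∘ s) i = σ (rttPerm n r s i) := by
    change perm (List.ofFn (σ ∘ s)) i = σ (perm (List.ofFn s) i)
    rw [hl]
    have h4 : (perm ((List.ofFn s).map σ))⁻¹ (σ (perm (List.ofFn s) i)) = i := by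
      apply Fin.ext
      refine Eq.trans h2 ?_
      simp [pos]
    exact (Equiv.Perm.inv_eq_iff_eq.1 h4).symm
  rw [h3, Equiv.Perm.mul_apply]

lemma top_eq {m r : ℕ} (s : Fin r → Fin (m+1)) (h : ∃ j, s j = Fin.last m) :
    top (m+1) r s = fixedPointCount (rttPerm (m+1) r s) := by
  unfold top fixedFirst fixedPointCount
  congr 1
  apply Finset.filter_congr
  intro i _
  refine ⟨fun h => h.2, fun hi => ⟨?_, hi⟩⟩
  by_contra hlt
  rw [distinct_eq] at hlt
  refine bottom (List.ofFn s) i hi (by omega) ?_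
  simpa [List.mem_ofFn] using h

end RTT

namespace RTT

lemma card_fix (n ℓ : ℕ) :
    (Finset.univ.filter fun σ : Equiv.Perm (Fin n) => fixedPointCount σ = ℓ).card
      = n.choose ℓ * numDerangements (n - ℓ) := by
  classical
  have h := Finset.card_eq_sum_card_fiberwise
    (s := Finset.univ.filter fun σ : Equiv.Perm (Fin n) => fixedPointCount σ = ℓ)
    (t := Finset.powersetCard ℓ (Finset.univ : Finset (Fin n)))
    (f := fun σ => Finset.univ.filter fun i => σ i = i) (by
      intro σ hσ
      simp only [Finset.coe_filter, Finset.mem_univ, true_and, Set.mem_ofPred_eq] at hσ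
      simpa [Finset.mem_powersetCard, fixedPointCount] using hσ)
  rw [h, Finset.sum_const_nat (m := numDerangements (n - ℓ))]
  · simp
  · intro S hS
    have hS' : S.card = ℓ := (Finset.mem_powersetCard.1 hS).2
    have e := Fintype.card_congr (derangements.subtypeEquiv (α := Fin n) (fun a => a ∉ S))
    rw [card_derangements_eq_numDerangements] at e
    have hc : Fintype.card {a : Fin n // a ∉ S} = n - ℓ := by
      rw [Fintype.card_subtype_compl]; simp [hS']
    rw [hc] at e
    rw [e, Fintype.card_subtype]
    congr 1
    ext σ
    simp only [Finset.mem_filter, Finset.mem_univ, true_and, not_not,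
      Function.mem_fixedPoints, Function.IsFixedPt, Finset.ext_iff]
    constructor
    · intro h a; exact (h.2 a).symm
    · intro h
      refine ⟨?_, fun a => (h a).symm⟩
      rw [← hS']
      unfold fixedPointCount
      congr 1
      ext a
      simp [h a]

lemma fix_tendsto (ℓ : ℕ) :
    Tendsto (fun n : ℕ => ((Finset.univ.filter fun σ : Equiv.Perm (Fin n) =>
      fixedPointCount σ = ℓ).card : ℝ) / n.factorial) atTop
      (𝓝 (Real.exp (-1) / (Nat.factorial ℓ : ℝ))) := by
  have h := (numDerangements_tendsto_inv_e.comp (tendsto_sub_atTop_nat ℓ)).div_const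
    (Nat.factorial ℓ : ℝ)
  refine h.congr' ?_
  filter_upwards [eventually_ge_atTop ℓ] with n hn
  rw [card_fix]
  have h2 := Nat.choose_mul_factorial_mul_factorial hn
  simp only [Function.comp]
  rw [← h2]
  push_cast
  have h3 : (n.choose ℓ : ℝ) ≠ 0 := by exact_mod_cast (Nat.choose_pos hn).ne'
  field_simp

/-- symmetric difference bound -/
lemma card_diff {α : Type*} [Fintype α] (p q b : α → Prop) [DecidablePred p] [DecidablePred q]
    [DecidablePred b] (h : ∀ x, ¬ b x → (p x ↔ q x)) :
    |((Finset.univ.filter p).card : ℝ) - ((Finset.univ.filter q).card : ℝ)|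
      ≤ (Finset.univ.filter b).card := by
  classical
  have key : ∀ p q : α → Prop, ∀ [DecidablePred p] [DecidablePred q],
      (∀ x, ¬ b x → (p x ↔ q x)) →
      (Finset.univ.filter p).card ≤ (Finset.univ.filter q).card + (Finset.univ.filter b).card := by
    intro p q _ _ h
    refine le_trans (Finset.card_le_card ?_) (Finset.card_union_le _ _)
    intro x hx
    simp only [Finset.mem_filter, Finset.mem_univ, true_and, Finset.mem_union] at hx ⊢
    by_cases hb : b x
    · exact Or.inr hb
    · exact Or.inl ((h x hb).1 hx)
  have h1 := key p q h
  have h2 := key q p (fun x hx => (h x hx).symm)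
  rw [abs_le]
  constructor
  · have : ((Finset.univ.filter q).card : ℝ) ≤
      (Finset.univ.filter p).card + (Finset.univ.filter b).card := by exact_mod_cast h2
    linarith
  · have : ((Finset.univ.filter p).card : ℝ) ≤
      (Finset.univ.filter q).card + (Finset.univ.filter b).card := by exact_mod_cast h1
    linarith

lemma card_avoid (m r : ℕ) (c : Fin (m+1)) :
    (Finset.univ.filter fun s : Fin r → Fin (m+1) => ∀ j, s j ≠ c).card = m ^ r := by
  classical
  have : (Finset.univ.filter fun s : Fin r → Fin (m+1) => ∀ j, s j ≠ c)
      = Fintype.piFinset (fun _ : Fin r => Finset.univ.erase c) := by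
    ext s; simp [Fintype.mem_piFinset]
  rw [this, Fintype.card_piFinset]
  simp

lemma card_fixing (m : ℕ) (i : Fin (m+1)) :
    (Finset.univ.filter fun σ : Equiv.Perm (Fin (m+1)) => σ i = i).card = m.factorial := by
  classical
  have e := Fintype.card_congr (Equiv.Perm.subtypeEquivSubtypePerm (fun a : Fin (m+1) => a ≠ i))
  rw [Fintype.card_perm, Fintype.card_subtype_compl] at e
  simp only [Fintype.card_fin, Fintype.card_subtype_eq, Nat.add_sub_cancel] at e
  rw [e, Fintype.card_subtype]
  congr 1
  ext σ
  simp

lemma first_diff (m k ℓ : ℕ) (hk : k ≤ m + 1) :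
    |((Finset.univ.filter fun σ : Equiv.Perm (Fin (m+1)) => fixedFirst (m+1) k σ = ℓ).card : ℝ)
      - ((Finset.univ.filter fun σ : Equiv.Perm (Fin (m+1)) => fixedPointCount σ = ℓ).card : ℝ)|
      ≤ ((m + 1 - k : ℕ) : ℝ) * m.factorial := by
  classical
  refine le_trans (card_diff _ _ (fun σ => ∃ i : Fin (m+1), k ≤ (i : ℕ) ∧ σ i = i) ?_) ?_
  · intro σ hσ
    push Not at hσ
    have : fixedFirst (m+1) k σ = fixedPointCount σ := by
      unfold fixedFirst fixedPointCount
      congr 1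
      apply Finset.filter_congr
      intro i _
      refine ⟨fun h => h.2, fun h => ⟨?_, h⟩⟩
      by_contra hlt
      exact hσ i (by omega) h
    rw [this]
  · have hsub : (Finset.univ.filter fun σ : Equiv.Perm (Fin (m+1)) =>
        ∃ i : Fin (m+1), k ≤ (i : ℕ) ∧ σ i = i) ⊆
        (Finset.univ.filter fun i : Fin (m+1) => k ≤ (i : ℕ)).biUnion
          (fun i => Finset.univ.filter fun σ : Equiv.Perm (Fin (m+1)) => σ i = i) := by
      intro σ hσ
      simpa using hσ
    have h1 := (Finset.card_le_card hsub).trans (Finset.card_biUnion_le)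
    simp only [card_fixing, Finset.sum_const, smul_eq_mul] at h1
    have h2 : (Finset.univ.filter fun i : Fin (m+1) => k ≤ (i : ℕ)).card = m + 1 - k := by
      have := Fin.card_filter_val_lt (n := m+1) (m := k)
      have h3 := Finset.card_filter_add_card_filter_not (s := (Finset.univ : Finset (Fin (m+1))))
        (fun i : Fin (m+1) => (i : ℕ) < k)
      simp only [not_lt, Finset.card_univ, Fintype.card_fin] at h3
      omega
    rw [h2] at h1
    exact_mod_cast h1

lemma sum_missing (m r : ℕ) :
    ∑ s : Fin r → Fin (m+1), (m + 1 - distinctCount (m+1) r s) = (m + 1) * m ^ r := by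
  classical
  have h : ∀ s : Fin r → Fin (m+1), m + 1 - distinctCount (m+1) r s
      = ∑ c : Fin (m+1), if ∀ j, s j ≠ c then 1 else 0 := by
    intro s
    rw [← Finset.card_filter]
    have : (Finset.univ.filter fun c : Fin (m+1) => ∀ j, s j ≠ c) = (Finset.univ.image s)ᶜ := by
      ext c; simp
    rw [this, Finset.card_compl]
    simp [distinctCount]
  simp_rw [h]
  rw [Finset.sum_comm]
  simp_rw [← Finset.card_filter, card_avoid]
  simp

lemma top_sum (n r ℓ : ℕ) :
    n.factorial * (Finset.univ.filter fun s : Fin r → Fin n => top n r s = ℓ).card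
      = ∑ s : Fin r → Fin n, (Finset.univ.filter fun σ : Equiv.Perm (Fin n) =>
          fixedFirst n (distinctCount n r s) σ = ℓ).card := by
  have h1 : ∀ s : Fin r → Fin n, (Finset.univ.filter fun σ : Equiv.Perm (Fin n) =>
          fixedFirst n (distinctCount n r s) σ = ℓ).card
        = ∑ σ : Equiv.Perm (Fin n), if top n r (σ ∘ s) = ℓ then 1 else 0 := by
    intro s
    rw [Finset.card_filter]
    rw [← Equiv.sum_comp (Equiv.mulRight (rttPerm n r s))]
    refine Finset.sum_congr rfl fun σ _ => ?_
    rw [top_comp]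
    rfl
  simp_rw [h1]
  rw [Finset.sum_comm]
  have h2 : ∀ σ : Equiv.Perm (Fin n), (∑ s : Fin r → Fin n, if top n r (σ ∘ s) = ℓ then 1 else 0)
      = (Finset.univ.filter fun s : Fin r → Fin n => top n r s = ℓ).card := by
    intro σ
    rw [Finset.card_filter]
    exact Equiv.sum_comp (Equiv.arrowCongr (Equiv.refl (Fin r)) σ)
      (fun s => if top n r s = ℓ then 1 else 0)
  simp_rw [h2]
  simp [Fintype.card_perm]

lemma main_bound (m r ℓ : ℕ) :
    |unifProb (fun s : Fin r → Fin (m+1) => fixedPointCount (rttPerm (m+1) r s) = ℓ)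
      - ((Finset.univ.filter fun σ : Equiv.Perm (Fin (m+1)) =>
      fixedPointCount σ = ℓ).card : ℝ) / (m+1).factorial| ≤ 2 * ((m : ℝ) / (m+1)) ^ r := by
  classical
  set D : ℝ := ((Finset.univ.filter fun σ : Equiv.Perm (Fin (m+1)) =>
      fixedPointCount σ = ℓ).card : ℝ) with hD
  set A : ℝ := ((Finset.univ.filter fun s : Fin r → Fin (m+1) =>
      fixedPointCount (rttPerm (m+1) r s) = ℓ).card : ℝ) with hA
  set T : ℝ := ((Finset.univ.filter fun s : Fin r → Fin (m+1) =>
      top (m+1) r s = ℓ).card : ℝ) with hT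
  have h1 : |A - T| ≤ (m : ℝ) ^ r := by
    have := card_diff (fun s : Fin r → Fin (m+1) => fixedPointCount (rttPerm (m+1) r s) = ℓ)
      (fun s => top (m+1) r s = ℓ) (fun s => ∀ j, s j ≠ Fin.last m) (by
        intro s hs
        push Not at hs
        rw [top_eq s hs])
    rw [card_avoid, Nat.cast_pow] at this
    exact this
  have h2 : |((m+1).factorial : ℝ) * T - ((m : ℝ) + 1) ^ r * D|
      ≤ (m+1).factorial * (m : ℝ) ^ r := by
    have e1 : ((m+1).factorial : ℝ) * T = ∑ s : Fin r → Fin (m+1),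
        ((Finset.univ.filter fun σ : Equiv.Perm (Fin (m+1)) =>
          fixedFirst (m+1) (distinctCount (m+1) r s) σ = ℓ).card : ℝ) := by
      rw [hT]; exact_mod_cast top_sum (m+1) r ℓ
    have e2 : ((m : ℝ) + 1) ^ r * D = ∑ s : Fin r → Fin (m+1), D := by
      simp
    rw [e1, e2, ← Finset.sum_sub_distrib]
    refine (Finset.abs_sum_le_sum_abs _ _).trans ?_
    refine (Finset.sum_le_sum fun s _ => first_diff m (distinctCount (m+1) r s) ℓ ?_).trans ?_
    · unfold distinctCount
      simpa using Finset.card_le_univ (Finset.univ.image s)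
    · rw [← Finset.sum_mul]
      have := sum_missing m r
      have h3 : (∑ s : Fin r → Fin (m+1), ((m + 1 - distinctCount (m+1) r s : ℕ) : ℝ))
        = ((m : ℝ) + 1) * (m : ℝ) ^ r := by exact_mod_cast this
      rw [h3, Nat.factorial_succ]
      push_cast
      apply le_of_eq; ring
  have hP : unifProb (fun s : Fin r → Fin (m+1) => fixedPointCount (rttPerm (m+1) r s) = ℓ)
      = A / ((m : ℝ) + 1) ^ r := by
    unfold unifProb
    rw [Nat.card_eq_fintype_card, Fintype.card_subtype]
    simp [hA]
  rw [hP, div_pow]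
  have hf : (0 : ℝ) < ((m+1).factorial : ℝ) := by positivity
  have hN : (0 : ℝ) < ((m : ℝ) + 1) ^ r := by positivity
  generalize ((m : ℝ) + 1) ^ r = N at *
  generalize ((m+1).factorial : ℝ) = f at *
  generalize (m : ℝ) ^ r = B at *
  have e : A / N - D / f = (A - T) / N + (f * T - N * D) / (f * N) := by
    field_simp; ring
  rw [e]
  refine (abs_add_le _ _).trans ?_
  rw [abs_div, abs_div, abs_of_pos hN, abs_of_pos (mul_pos hf hN)]
  have g1 : |A - T| / N ≤ B / N := by gcongr
  have g2 : |f * T - N * D| / (f * N) ≤ B / N := by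
    calc _ ≤ (f * B) / (f * N) := by gcongr
      _ = B / N := by field_simp
  calc _ ≤ B / N + B / N := add_le_add g1 g2
    _ = _ := by ring

lemma pow_le (n r : ℕ) (hn : 1 ≤ n) : (((n - 1 : ℕ) : ℝ) / n) ^ r ≤ Real.exp (-((r : ℝ) / n)) := by
  have hn' : (0 : ℝ) < n := by exact_mod_cast hn
  have h : (((n - 1 : ℕ) : ℝ) / n) ≤ Real.exp (-(1 / (n : ℝ))) := by
    have := Real.add_one_le_exp (-(1 / (n : ℝ)))
    refine le_trans (le_of_eq ?_) this
    rw [Nat.cast_sub hn]; field_simp; push_cast; ring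
  refine (pow_le_pow_left₀ (by positivity) h r).trans (le_of_eq ?_)
  rw [← Real.exp_nat_mul]
  congr 1; ring

end RTT

/-- **Theorem (fixed points, mixed regime).** If `(r n)` are positive integers with
`r n / n → ∞`, then the number of fixed points after `r n` iterated random-to-top shuffles
of an `n`-card deck converges in distribution to `Poisson(1)`:
for every `ℓ`, `P(F = ℓ) → e⁻¹ / ℓ!`. -/
theorem rtt_fixedPoints_mixed (r : ℕ → ℕ) (hrpos : ∀ n, 0 < r n)
    (hr : Tendsto (fun n : ℕ => (r n : ℝ) / n) atTop atTop) (ℓ : ℕ) :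
    Tendsto
      (fun n : ℕ =>
        unifProb (fun s : Fin (r n) → Fin n => fixedPointCount (rttPerm n (r n) s) = ℓ))
      atTop
      (𝓝 (Real.exp (-1) / (Nat.factorial ℓ : ℝ))) := by
  have h1 := RTT.fix_tendsto ℓ
  have h2 : Tendsto (fun n : ℕ => 2 * Real.exp (-((r n : ℝ) / n))) atTop (𝓝 0) := by
    have := (Real.tendsto_exp_neg_atTop_nhds_zero.comp hr).const_mul 2
    simpa [Function.comp_def] using this
  have h3 : Tendsto (fun n : ℕ =>
      unifProb (fun s : Fin (r n) → Fin n => fixedPointCount (rttPerm n (r n) s) = ℓ)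
      - ((Finset.univ.filter fun σ : Equiv.Perm (Fin n) =>
      fixedPointCount σ = ℓ).card : ℝ) / n.factorial) atTop (𝓝 0) := by
    apply squeeze_zero_norm' _ h2
    filter_upwards [eventually_ge_atTop 1] with n hn
    have hb := RTT.pow_le n (r n) hn
    obtain ⟨m, rfl⟩ : ∃ m, n = m + 1 := ⟨n - 1, by omega⟩
    have := RTT.main_bound m (r (m+1)) ℓ
    rw [Real.norm_eq_abs]
    refine this.trans ?_
    simp only [Nat.add_sub_cancel, Nat.cast_add, Nat.cast_one] at hb ⊢
    linarith
  simpa using h3.add h1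
end

section
/- Fix a constant c > 0. For each n, let D^{⌊cn⌋}_n be the number of descents of the random permutation of [n] obtained by performing r = ⌊cn⌋ iterated random-to-top shuffles starting from the identity. Then (D^{⌊cn⌋}_n − n(1 − e^{−c})/2) / √n converges in distribution, as n → ∞, to a centered normal random variable with variance (1 + 2e^{−c} − 3(1+c)e^{−2c}) / 12. -/
open MeasureTheory ProbabilityTheory Filter Finset Topology
open scoped NNReal

namespace RTT

/-- Number of descents of a list. -/
def desL {n : ℕ} : List (Fin n) → ℕ
  | [] => 0
  | [_] => 0
  | x :: y :: L => desL (y :: L) + if y < x then 1 else 0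

/-- Number of descents of the reversed list. -/
def revDes {n : ℕ} : List (Fin n) → ℕ
  | [] => 0
  | [_] => 0
  | x :: y :: L => revDes (y :: L) + if x < y then 1 else 0

lemma desL_append {n : ℕ} (x : Fin n) (B : List (Fin n)) :
    ∀ A : List (Fin n), desL (A ++ x :: B) = desL (A ++ [x]) + desL (x :: B)
  | [] => by simp [desL]
  | [y] => by simp [desL]; omega
  | y :: z :: A => by
    have := desL_append x B (z :: A)
    simp only [List.cons_append] at this ⊢
    simp only [desL, this]
    omega

lemma desL_reverse {n : ℕ} : ∀ L : List (Fin n), desL L.reverse = revDes L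
  | [] => rfl
  | [_] => rfl
  | x :: y :: L => by
    have := desL_reverse (y :: L)
    rw [List.reverse_cons, List.reverse_cons, List.append_assoc]
    rw [List.reverse_cons] at this
    simp only [List.singleton_append]
    rw [desL_append, this]
    simp [desL, revDes]

lemma desL_sorted {n : ℕ} : ∀ L : List (Fin n), L.Pairwise (· < ·) → desL L = 0
  | [], _ => rfl
  | [_], _ => rfl
  | x :: y :: L, h => by
    have h2 := h
    rw [List.pairwise_cons] at h
    have := desL_sorted (y :: L) h.2
    have h3 : x < y := h.1 y (by simp)
    simp [desL, this, h3.le]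

lemma desL_append_sorted {n : ℕ} (A B : List (Fin n)) (hB : B.Pairwise (· < ·)) :
    desL A ≤ desL (A ++ B) ∧ desL (A ++ B) ≤ desL A + 1 := by
  cases B with
  | nil => simp
  | cons x B =>
    rw [desL_append, desL_sorted _ hB]
    rcases List.eq_nil_or_concat A with rfl | ⟨A', y, rfl⟩
    · simp [desL]
    · rw [List.concat_eq_append, List.append_assoc, List.singleton_append, desL_append y [x]]
      simp only [desL]
      split_ifs <;> omega

lemma desL_ofFn {m : ℕ} : ∀ (n : ℕ) (f : Fin (n + 1) → Fin m),
    desL (List.ofFn f) = ∑ i : Fin n, if f i.succ < f i.castSucc then 1 else 0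
  | 0, f => by simp [desL]
  | n + 1, f => by
    have := desL_ofFn n (fun i => f i.succ)
    rw [List.ofFn_succ, List.ofFn_succ, desL, ← List.ofFn_succ (f := fun i => f i.succ), this,
      Fin.sum_univ_succ, add_comm]
    rfl

lemma descentCount_eq {n : ℕ} (π : Equiv.Perm (Fin n)) :
    descentCount π = desL (List.ofFn π) := by
  cases n with
  | zero => simp [descentCount, desL]
  | succ n =>
    rw [desL_ofFn, descentCount, Finset.sum_ite, Finset.sum_const_zero, add_zero,
      ← Finset.card_eq_sum_ones]
    symm
    apply Finset.card_bij (fun i _ => (i.castSucc, i.succ))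
    · intro i hi
      simpa using hi
    · intro i _ j _ h
      simpa using h
    · rintro ⟨a, b⟩ h
      simp only [Finset.mem_filter, Finset.mem_univ, true_and] at h
      have hb : (a : ℕ) < n := by have := b.2; omega
      have h1 : a = (⟨a, hb⟩ : Fin n).castSucc := rfl
      have h2 : b = (⟨a, hb⟩ : Fin n).succ := by
        ext; simp [← h.1]
      refine ⟨⟨a, hb⟩, ?_, ?_⟩
      · simp only [Finset.mem_filter, Finset.mem_univ, true_and]
        rw [← h1, ← h2]; exact h.2
      · rw [← h1, ← h2]

lemma ofFn_moveToTop {n : ℕ} (c : Fin n) (π : Equiv.Perm (Fin n)) :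
    List.ofFn (moveToTop c π) = c :: (List.ofFn π).erase c := by
  cases n with
  | zero => exact c.elim0
  | succ n =>
    rw [List.ofFn_succ]
    have h0 : moveToTop c π 0 = c := by
      simp [moveToTop, Equiv.Perm.mul_apply, Equiv.Perm.inv_def]
    have h1 : ∀ j : Fin n, moveToTop c π j.succ = π ((π⁻¹ c).succAbove j) := by
      intro j
      simp [moveToTop, Equiv.Perm.mul_apply, Equiv.Perm.inv_def]
    rw [h0]
    congr 1
    simp_rw [h1]
    set p := π⁻¹ c with hp
    have hc : c = π p := by simp [hp]
    have : List.ofFn π = List.ofFn (fun j => π j) := rfl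
    have e1 : (List.ofFn π).erase c = (List.ofFn π).eraseIdx p := by
      have hn : (List.ofFn π).Nodup := List.nodup_ofFn.2 π.injective
      have hl : (p : ℕ) < (List.ofFn π).length := by simpa using Nat.lt_succ_iff.1 p.2
      have := hn.erase_getElem p hl
      rw [← this, hc, List.getElem_ofFn]
    rw [e1]
    apply List.ext_getElem
    · simpa [List.length_eraseIdx] using Nat.lt_succ_iff.1 p.2
    · intro i h1 h2
      rw [List.getElem_eraseIdx]
      simp only [List.getElem_ofFn, Fin.succAbove]
      split_ifs with h3 h4 h4
      · congr 1
      · exact absurd h3 (by simpa [Fin.lt_def] using h4)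
      · exact absurd h4 (by simpa [Fin.lt_def] using h3)
      · congr 1

lemma ofFn_foldl {n : ℕ} : ∀ (l : List (Fin n)) (π : Equiv.Perm (Fin n)),
    List.ofFn (l.foldl (fun (π : Equiv.Perm (Fin n)) c => moveToTop c π) π : Equiv.Perm (Fin n)) =
      l.dedup.reverse ++ (List.ofFn π).filter (fun y => y ∉ l)
  | [], π => by simp
  | x :: l, π => by
    rw [List.foldl_cons, ofFn_foldl l, ofFn_moveToTop]
    have hn : (List.ofFn π).Nodup := List.nodup_ofFn.2 π.injective
    have e : ((List.ofFn π).erase x).filter (fun y => y ∉ l) =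
        (List.ofFn π).filter (fun y => y ∉ x :: l) := by
      rw [hn.erase_eq_filter, List.filter_filter]
      apply List.filter_congr
      intro y _
      by_cases h1 : y = x <;> by_cases h2 : y ∈ l <;> simp [h1, h2]
    by_cases h : x ∈ l
    · rw [List.dedup_cons_of_mem h, List.filter_cons_of_neg (by simpa using h), e]
    · rw [List.dedup_cons_of_notMem h, List.filter_cons_of_pos (by simpa using h), e]
      simp

lemma descent_approx {n r : ℕ} (s : Fin r → Fin n) :
    revDes (List.ofFn s).dedup ≤ descentCount (rttPerm n r s) ∧
    descentCount (rttPerm n r s) ≤ revDes (List.ofFn s).dedup + 1 := by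
  rw [descentCount_eq, rttPerm, ofFn_foldl, ← desL_reverse]
  apply desL_append_sorted
  apply List.Pairwise.filter
  have : (List.ofFn ((1 : Equiv.Perm (Fin n)) : Fin n → Fin n)) = List.finRange n := by
    rw [List.finRange]; rfl
  rw [this]
  exact List.pairwise_lt_finRange n


/-- State update when card `x` is selected: newly discovered cards are put in front. -/
def step {n : ℕ} (x : Fin n) (L : List (Fin n)) : List (Fin n) :=
  if x ∈ L then L else x :: L

/-- The cards not yet discovered. -/
def comp {n : ℕ} (L : List (Fin n)) : Finset (Fin n) := Finset.univ.filter (fun x => x ∉ L)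

/-- The number of cards not yet discovered. -/
def Yc {n : ℕ} (L : List (Fin n)) : ℕ := (comp L).card

/-- The number of undiscovered cards below `x`. -/
def below {n : ℕ} (L : List (Fin n)) (x : Fin n) : ℕ := ((comp L).filter (fun z => z < x)).card

/-- The number of undiscovered cards below the last discovered one. -/
def rk {n : ℕ} : List (Fin n) → ℕ
  | [] => 0
  | y :: L => below (y :: L) y

lemma mem_comp {n : ℕ} {L : List (Fin n)} {x : Fin n} : x ∈ comp L ↔ x ∉ L := by
  simp [comp]

lemma Yc_le {n : ℕ} (L : List (Fin n)) : Yc L ≤ n := by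
  simpa [Yc] using Finset.card_le_univ (comp L)

lemma rk_le {n : ℕ} (L : List (Fin n)) : rk L ≤ Yc L := by
  cases L with
  | nil => simp [rk]
  | cons y L => exact Finset.card_filter_le (comp (y :: L)) (fun z => z < y)

lemma Yc_cons {n : ℕ} {L : List (Fin n)} {x : Fin n} (hx : x ∉ L) :
    Yc (x :: L) + 1 = Yc L := by
  have : comp (x :: L) = (comp L).erase x := by
    ext y; simp [comp]
  rw [Yc, this, Finset.card_erase_add_one (mem_comp.2 hx), Yc]

lemma rk_cons {n : ℕ} {L : List (Fin n)} {x : Fin n} : rk (x :: L) = below L x := by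
  change below (x :: L) x = below L x
  unfold below
  apply congrArg Finset.card
  ext z
  simp only [comp, Finset.mem_filter, Finset.mem_univ, true_and, List.mem_cons, not_or]
  constructor
  · rintro ⟨⟨_, h⟩, h2⟩; exact ⟨h, h2⟩
  · rintro ⟨h, h2⟩; exact ⟨⟨h2.ne, h⟩, h2⟩

lemma below_lt {n : ℕ} {L : List (Fin n)} {x : Fin n} (hx : x ∉ L) : below L x < Yc L := by
  apply Finset.card_lt_card
  rw [Finset.ssubset_iff_of_subset (Finset.filter_subset _ _)]
  exact ⟨x, mem_comp.2 hx, by simp⟩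

lemma below_mono {n : ℕ} {L : List (Fin n)} {x y : Fin n} (h : x ≤ y) :
    below L x ≤ below L y := by
  apply Finset.card_le_card
  intro z hz
  simp only [Finset.mem_filter] at hz ⊢
  exact ⟨hz.1, hz.2.trans_le h⟩

lemma below_strict {n : ℕ} {L : List (Fin n)} {x y : Fin n} (hx : x ∉ L) (h : x < y) :
    below L x < below L y := by
  apply Finset.card_lt_card
  rw [Finset.ssubset_iff_of_subset]
  · exact ⟨x, by simp [h, mem_comp.2 hx], by simp⟩
  · intro z hz
    simp only [Finset.mem_filter] at hz ⊢
    exact ⟨hz.1, hz.2.trans h⟩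

lemma revDes_cons {n : ℕ} {L : List (Fin n)} {x : Fin n} (hx : x ∉ L) :
    revDes (x :: L) = revDes L + if below L x < rk L then 1 else 0 := by
  cases L with
  | nil => simp [revDes, rk]
  | cons y L =>
    rw [revDes, rk]
    congr 1
    by_cases h : x < y
    · rw [if_pos h, if_pos (below_strict hx h)]
    · rw [if_neg h, if_neg (not_lt.2 (below_mono (not_lt.1 h)))]

lemma sum_below {n : ℕ} (L : List (Fin n)) (G : ℕ → ℝ) :
    ∑ x ∈ comp L, G (below L x) = ∑ m ∈ Finset.range (Yc L), G m := by
  have hinj : Set.InjOn (below L) (comp L : Set (Fin n)) := by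
    intro x hx y hy h
    have hx' := mem_comp.1 (Finset.mem_coe.1 hx)
    have hy' := mem_comp.1 (Finset.mem_coe.1 hy)
    rcases lt_trichotomy x y with h1 | h1 | h1
    · exact absurd h (below_strict hx' h1).ne
    · exact h1
    · exact absurd h (below_strict hy' h1).ne'
  have him : (comp L).image (below L) = Finset.range (Yc L) := by
    apply Finset.eq_of_subset_of_card_le
    · intro m hm
      obtain ⟨x, hx, rfl⟩ := Finset.mem_image.1 hm
      exact Finset.mem_range.2 (below_lt (mem_comp.1 hx))
    · rw [Finset.card_image_of_injOn hinj, Finset.card_range, Yc]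
  rw [← him, Finset.sum_image hinj]

lemma sum_rotate (Y R : ℕ) (hR : R ≤ Y) (F : ℝ → ℝ) :
    ∑ m ∈ Finset.range Y, F ((if m < R then 1 else 0) + (m : ℝ) / Y - (R : ℝ) / Y) =
      ∑ m ∈ Finset.range Y, F ((m : ℝ) / Y) := by
  rcases Nat.eq_zero_or_pos Y with rfl | hY
  · simp
  obtain ⟨T, rfl⟩ := Nat.exists_eq_add_of_le hR
  have hne : ((R + T : ℕ) : ℝ) ≠ 0 := by exact_mod_cast hY.ne'
  have h2 : ∑ m ∈ Finset.range (R + T), F ((m : ℝ) / (R + T : ℕ)) =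
      ∑ m ∈ Finset.range (T + R), F ((m : ℝ) / (R + T : ℕ)) := by rw [add_comm T R]
  rw [h2, Finset.sum_range_add, Finset.sum_range_add, add_comm]
  congr 1
  · apply Finset.sum_congr rfl
    intro m _
    rw [if_neg (by omega)]
    congr 1
    push_cast
    ring
  · apply Finset.sum_congr rfl
    intro m hm
    rw [if_pos (Finset.mem_range.1 hm)]
    congr 1
    field_simp
    push_cast
    ring

lemma sum_V1 (Y : ℕ) (hY : 0 < Y) :
    ∑ m ∈ Finset.range Y, ((m : ℝ) / Y - 1 / 2) = -1 / 2 := by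
  have h : ∀ k : ℕ, ∑ m ∈ Finset.range k, ((m : ℝ) / Y - 1 / 2) = 
      (k : ℝ) * (k - 1) / (2 * Y) - k / 2 := by
    intro k
    induction k with
    | zero => simp
    | succ k ih =>
      rw [Finset.sum_range_succ, ih]
      have : (Y : ℝ) ≠ 0 := by positivity
      push_cast
      field_simp
      ring
  rw [h]
  have : (Y : ℝ) ≠ 0 := by positivity
  field_simp
  ring

lemma sum_V2 (Y : ℕ) (hY : 0 < Y) :
    ∑ m ∈ Finset.range Y, ((m : ℝ) / Y - 1 / 2) ^ 2 = (Y : ℝ) / 12 + 1 / (6 * Y) := by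
  have hY0 : (Y : ℝ) ≠ 0 := by positivity
  have h : ∀ k : ℕ, ∑ m ∈ Finset.range k, ((m : ℝ) / Y - 1 / 2) ^ 2 = 
      (k : ℝ) * (k - 1) * (2 * k - 1) / (6 * Y ^ 2) - (k : ℝ) * (k - 1) / (2 * Y) + k / 4 := by
    intro k
    induction k with
    | zero => simp
    | succ k ih =>
      rw [Finset.sum_range_succ, ih]
      push_cast
      field_simp
      ring
  rw [h]
  field_simp
  ring

/-- The main (undisturbed) increment of the phase. -/
noncomputable def d0 {n : ℕ} (L : List (Fin n)) (w : ℝ) (x : Fin n) : ℝ :=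
  if x ∈ L then -w * ((Yc L : ℝ) / n) / 2 else
    ((if below L x < rk L then 1 else 0) + (below L x : ℝ) / Yc L - (rk L : ℝ) / Yc L) - 1 / 2
      + w * (1 - (Yc L : ℝ) / n) / 2

lemma sum_d0_split {n : ℕ} (L : List (Fin n)) (w : ℝ) (F : ℝ → ℝ) :
    ∑ x, F (d0 L w x) = ((n : ℝ) - Yc L) * F (-w * ((Yc L : ℝ) / n) / 2) +
      ∑ m ∈ Finset.range (Yc L), F ((m : ℝ) / Yc L - 1 / 2 + w * (1 - (Yc L : ℝ) / n) / 2) := by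
  rw [← Finset.sum_add_sum_compl (comp L), add_comm]
  congr 1
  · have : ∀ x ∈ (comp L)ᶜ, F (d0 L w x) = F (-w * ((Yc L : ℝ) / n) / 2) := by
      intro x hx
      rw [Finset.mem_compl, mem_comp, not_not] at hx
      rw [d0, if_pos hx]
    rw [Finset.sum_congr rfl this, Finset.sum_const, Finset.card_compl, nsmul_eq_mul,
      Fintype.card_fin, ← Yc, Nat.cast_sub (Yc_le L)]
  · have : ∀ x ∈ comp L, F (d0 L w x) = (fun m : ℕ => F (((if m < rk L then 1 else 0) +
        (m : ℝ) / Yc L - (rk L : ℝ) / Yc L) - 1 / 2 + w * (1 - (Yc L : ℝ) / n) / 2)) (below L x) := by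
      intro x hx
      rw [mem_comp] at hx
      rw [d0, if_neg hx]
    refine (Finset.sum_congr rfl this).trans ((sum_below L (fun m : ℕ => F (((if m < rk L then 1 else 0) +
        (m : ℝ) / Yc L - (rk L : ℝ) / Yc L) - 1 / 2 + w * (1 - (Yc L : ℝ) / n) / 2))).trans ?_)
    exact sum_rotate (Yc L) (rk L) (rk_le L) (fun y => F (y - 1 / 2 + w * (1 - (Yc L : ℝ) / n) / 2))

lemma sum_d0_one {n : ℕ} (hn : 0 < n) (L : List (Fin n)) (w : ℝ) :
    |∑ x, d0 L w x| ≤ 1 / 2 := by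
  have := sum_d0_split L w id
  simp only [id] at this
  rw [this, Finset.sum_add_distrib]
  have hn' : (n : ℝ) ≠ 0 := by positivity
  rcases Nat.eq_zero_or_pos (Yc L) with h | h
  · simp [h]
  · rw [sum_V1 _ h]
    simp only [Finset.sum_const, Finset.card_range, nsmul_eq_mul]
    have : ((n : ℝ) - Yc L) * (-w * ((Yc L : ℝ) / n) / 2) + (-1 / 2 + Yc L * (w * (1 - (Yc L : ℝ) / n) / 2))
      = -1 / 2 := by
      field_simp
      ring
    rw [this]
    norm_num [abs_le]

/-- The variance function. -/
noncomputable def vf (w p : ℝ) : ℝ := p / 12 + w ^ 2 * p * (1 - p) / 4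

lemma sum_d0_two {n : ℕ} (hn : 0 < n) (L : List (Fin n)) (w : ℝ) (hw0 : 0 ≤ w) (hw1 : w ≤ 1) :
    |∑ x, (d0 L w x) ^ 2 - n * vf w ((Yc L : ℝ) / n)| ≤ 1 := by
  have := sum_d0_split L w (fun y => y ^ 2)
  rw [this]
  have hn' : (n : ℝ) ≠ 0 := by positivity
  rcases Nat.eq_zero_or_pos (Yc L) with h | h
  · simp [h, vf]
  · have e : ∀ m : ℕ, ((m : ℝ) / Yc L - 1 / 2 + w * (1 - (Yc L : ℝ) / n) / 2) ^ 2 =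
        ((m : ℝ) / Yc L - 1 / 2) ^ 2 + (w * (1 - (Yc L : ℝ) / n)) * ((m : ℝ) / Yc L - 1 / 2)
        + (w * (1 - (Yc L : ℝ) / n) / 2) ^ 2 := by intro m; ring
    simp_rw [e]
    rw [Finset.sum_add_distrib, Finset.sum_add_distrib, ← Finset.mul_sum, sum_V1 _ h, sum_V2 _ h]
    simp only [Finset.sum_const, Finset.card_range, nsmul_eq_mul]
    have hY : (Yc L : ℝ) ≠ 0 := by positivity
    have hY1 : (1 : ℝ) ≤ Yc L := by exact_mod_cast h
    have hYn : (Yc L : ℝ) ≤ n := by exact_mod_cast Yc_le L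
    have hp0 : 0 ≤ (Yc L : ℝ) / n := by positivity
    have hp1 : (Yc L : ℝ) / n ≤ 1 := by
      rw [div_le_one (by positivity)]; exact hYn
    have key : ((n : ℝ) - Yc L) * (-w * ((Yc L : ℝ) / n) / 2) ^ 2 +
        ((Yc L : ℝ) / 12 + 1 / (6 * Yc L) + w * (1 - (Yc L : ℝ) / n) * (-1 / 2) +
          Yc L * (w * (1 - (Yc L : ℝ) / n) / 2) ^ 2) - n * vf w ((Yc L : ℝ) / n) =
        1 / (6 * Yc L) - w * (1 - (Yc L : ℝ) / n) / 2 := by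
      unfold vf
      field_simp
      ring
    rw [key]
    have h1 : 0 ≤ 1 / (6 * (Yc L : ℝ)) := by positivity
    have h2 : 1 / (6 * (Yc L : ℝ)) ≤ 1 := by
      rw [div_le_one (by positivity)]; linarith
    have h3 : 0 ≤ w * (1 - (Yc L : ℝ) / n) := mul_nonneg hw0 (by linarith)
    have h4 : w * (1 - (Yc L : ℝ) / n) ≤ 1 := mul_le_one₀ hw1 (by linarith) (by linarith)
    rw [abs_le]
    constructor <;> linarith

lemma abs_d0_le {n : ℕ} (hn : 0 < n) (L : List (Fin n)) (w : ℝ) (hw0 : 0 ≤ w) (hw1 : w ≤ 1)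
    (x : Fin n) : |d0 L w x| ≤ 1 := by
  have hYn : (Yc L : ℝ) ≤ n := by exact_mod_cast Yc_le L
  have hn0 : (0 : ℝ) < n := by positivity
  have hp0 : 0 ≤ (Yc L : ℝ) / n := by positivity
  have hp1 : (Yc L : ℝ) / n ≤ 1 := by
    rw [div_le_one (by positivity)]; exact hYn
  have h3 : 0 ≤ w * (1 - (Yc L : ℝ) / n) := mul_nonneg hw0 (by linarith)
  have h4 : w * (1 - (Yc L : ℝ) / n) ≤ 1 := mul_le_one₀ hw1 (by linarith) (by linarith)
  have h5 : 0 ≤ w * ((Yc L : ℝ) / n) := mul_nonneg hw0 (by linarith)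
  have h6 : w * ((Yc L : ℝ) / n) ≤ 1 := mul_le_one₀ hw1 (by linarith) (by linarith)
  unfold d0
  split_ifs with h h2
  · rw [abs_le]; constructor <;> linarith
  · have hlt := below_lt h
    have hY : (0 : ℝ) < Yc L := by exact_mod_cast (Nat.zero_le _).trans_lt hlt
    have a1 : (below L x : ℝ) / Yc L ≤ (rk L : ℝ) / Yc L := by
      gcongr
    have a2 : (rk L : ℝ) / Yc L ≤ 1 := by
      rw [div_le_one hY]; exact_mod_cast rk_le L
    have a3 : 0 ≤ (below L x : ℝ) / Yc L := by positivity
    rw [abs_le]; constructor <;> linarith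
  · have hlt := below_lt h
    have hY : (0 : ℝ) < Yc L := by exact_mod_cast (Nat.zero_le _).trans_lt hlt
    have a1 : (rk L : ℝ) / Yc L ≤ (below L x : ℝ) / Yc L := by
      gcongr; exact not_lt.1 h2
    have a2 : (below L x : ℝ) / Yc L ≤ 1 := by
      rw [div_le_one hY]; exact_mod_cast hlt.le
    have a3 : 0 ≤ (rk L : ℝ) / Yc L := by positivity
    rw [abs_le]; constructor <;> linarith

/-- The phase. -/
noncomputable def phase {n : ℕ} (w : ℝ) (L : List (Fin n)) : ℝ :=
  revDes L + (rk L : ℝ) / Yc L + (1 - w) * Yc L / 2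

lemma phase_step_mem {n : ℕ} (L : List (Fin n)) (w : ℝ) (x : Fin n) (hx : x ∈ L) :
    phase w (step x L) = phase (w * (1 - 1 / n)) L + d0 L w x := by
  rw [step, if_pos hx, d0, if_pos hx]
  unfold phase
  ring

lemma phase_step_notMem {n : ℕ} (L : List (Fin n)) (w : ℝ) (x : Fin n)
    (hx : x ∉ L) : ∃ δ : ℝ, |δ| ≤ 1 / Yc L ∧
    phase w (step x L) = phase (w * (1 - 1 / n)) L + d0 L w x + δ := by
  rw [step, if_neg hx, d0, if_neg hx]
  refine ⟨(rk (x :: L) : ℝ) / Yc (x :: L) - (rk (x :: L) : ℝ) / Yc L, ?_, ?_⟩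
  · have h1 := rk_le (x :: L)
    rw [← Yc_cons hx]
    rcases Nat.eq_zero_or_pos (Yc (x :: L)) with h | h
    · have h0 : rk (x :: L) = 0 := by omega
      simp [h, h0]
    · have hY : (0 : ℝ) < Yc (x :: L) := by exact_mod_cast h
      have e : (rk (x :: L) : ℝ) / Yc (x :: L) - (rk (x :: L) : ℝ) / (Yc (x :: L) + 1 : ℕ) =
          ((rk (x :: L) : ℝ) / Yc (x :: L)) * (1 / (Yc (x :: L) + 1 : ℕ)) := by
        push_cast
        field_simp
        ring
      rw [e, abs_of_nonneg (by positivity)]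
      apply mul_le_of_le_one_left (by positivity)
      rw [div_le_one hY]
      exact_mod_cast h1
  · unfold phase
    rw [revDes_cons hx]
    have : (Yc L : ℝ) = Yc (x :: L) + 1 := by exact_mod_cast (Yc_cons hx).symm
    have h2 : (Yc (x :: L) : ℝ) = Yc L - 1 := by rw [this]; ring
    rw [h2, rk_cons]
    push_cast
    ring


/-- `e x = exp (i x)`. -/
noncomputable def ee (x : ℝ) : ℂ := Complex.exp (x * Complex.I)

lemma norm_ee (x : ℝ) : ‖ee x‖ = 1 := Complex.norm_exp_ofReal_mul_I x

lemma ee_add (x y : ℝ) : ee (x + y) = ee x * ee y := by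
  unfold ee
  rw [← Complex.exp_add]
  push_cast
  ring_nf

lemma norm_ee_sub (x y : ℝ) : ‖ee (x + y) - ee x‖ ≤ |y| := by
  rw [ee_add]
  have : ee x * ee y - ee x = ee x * (Complex.exp (Complex.I * y) - 1) := by
    unfold ee
    rw [mul_comm (Complex.I)]
    ring
  rw [this, norm_mul, norm_ee, one_mul]
  exact Real.norm_exp_I_mul_ofReal_sub_one_le

lemma norm_ee_taylor (x : ℝ) (hx : |x| ≤ 1) :
    ‖ee x - (1 + x * Complex.I - (x : ℂ) ^ 2 / 2)‖ ≤ |x| ^ 3 := by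
  have hn : ‖(x : ℂ) * Complex.I‖ = |x| := by simp
  have h := Complex.exp_bound (x := (x : ℂ) * Complex.I) (by rw [hn]; exact hx) (n := 3) (by norm_num)
  rw [hn] at h
  have e : ∑ m ∈ Finset.range 3, ((x : ℂ) * Complex.I) ^ m / (m.factorial : ℂ) =
      1 + x * Complex.I - (x : ℂ) ^ 2 / 2 := by
    simp only [Finset.sum_range_succ, Finset.sum_range_zero]
    simp [Nat.factorial, mul_pow]
    ring
  rw [e] at h
  refine h.trans ?_
  apply mul_le_of_le_one_right (by positivity)
  norm_num [Nat.factorial]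

lemma one_step {n : ℕ} (hn : 0 < n) (L : List (Fin n)) (w : ℝ) (hw0 : 0 ≤ w) (hw1 : w ≤ 1)
    (a : ℝ) (ha : |a| ≤ 1) :
    ‖(n : ℝ)⁻¹ • ∑ x, ee (a * phase w (step x L)) -
      ee (a * phase (w * (1 - 1 / n)) L) * ((1 - a ^ 2 * vf w ((Yc L : ℝ) / n) / 2 : ℝ) : ℂ)‖ ≤
      |a| ^ 3 + 2 * |a| / n + a ^ 2 / n := by
  have hn0 : (0 : ℝ) < n := by positivity
  set Φ := phase (w * (1 - 1 / n)) L with hΦ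
  set v := vf w ((Yc L : ℝ) / n) with hv
  -- pointwise comparison
  have hpt : ∀ x, ‖ee (a * phase w (step x L)) - ee (a * Φ) *
      (1 + (a * d0 L w x : ℝ) * Complex.I - ((a * d0 L w x : ℝ) : ℂ) ^ 2 / 2)‖ ≤
      |a| ^ 3 + (if x ∈ comp L then |a| * (1 / Yc L) else 0) := by
    intro x
    have hd : |a * d0 L w x| ≤ |a| := by
      rw [abs_mul]
      exact mul_le_of_le_one_right (abs_nonneg _) (abs_d0_le hn L w hw0 hw1 x)
    have ht := norm_ee_taylor (a * d0 L w x) (hd.trans ha)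
    have ht2 : ‖ee (a * Φ + a * d0 L w x) - ee (a * Φ) *
      (1 + (a * d0 L w x : ℝ) * Complex.I - ((a * d0 L w x : ℝ) : ℂ) ^ 2 / 2)‖ ≤ |a| ^ 3 := by
      rw [ee_add, ← mul_sub, norm_mul, norm_ee, one_mul]
      exact ht.trans (by gcongr)
    by_cases hx : x ∈ L
    · rw [if_neg (by simpa [mem_comp] using hx), add_zero, phase_step_mem L w x hx, mul_add]
      exact ht2
    · obtain ⟨δ, hδ, he⟩ := phase_step_notMem L w x hx
      rw [if_pos (mem_comp.2 hx), he, mul_add, mul_add, ← hΦ]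
      have h3 := norm_ee_sub (a * Φ + a * d0 L w x) (a * δ)
      have h4 : |a * δ| ≤ |a| * (1 / Yc L) := by rw [abs_mul]; gcongr
      have := norm_add_le_of_le (h3.trans h4) ht2
      rw [sub_add_sub_cancel] at this
      linarith
  have hsum : ‖∑ x, (ee (a * phase w (step x L)) - ee (a * Φ) *
      (1 + (a * d0 L w x : ℝ) * Complex.I - ((a * d0 L w x : ℝ) : ℂ) ^ 2 / 2))‖ ≤
      n * |a| ^ 3 + |a| := by
    refine (norm_sum_le_of_le _ (fun x _ => hpt x)).trans ?_
    rw [Finset.sum_add_distrib, ← Finset.sum_filter]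
    simp only [Finset.sum_const, Finset.card_univ, Fintype.card_fin, nsmul_eq_mul,
      Finset.filter_univ_mem]
    gcongr
    change (Yc L : ℝ) * (|a| * (1 / Yc L)) ≤ |a|
    rcases Nat.eq_zero_or_pos (Yc L) with h | h
    · simp [h]
    · have : (Yc L : ℝ) ≠ 0 := by positivity
      field_simp
      rfl
  set s1 := ∑ x, d0 L w x with hs1
  set s2 := ∑ x, (d0 L w x) ^ 2 with hs2
  have hs1' := sum_d0_one hn L w
  have hs2' := sum_d0_two hn L w hw0 hw1
  rw [← hs1] at hs1'
  rw [← hs2, ← hv] at hs2'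
  have hQ : ∑ x, (1 + (a * d0 L w x : ℝ) * Complex.I - ((a * d0 L w x : ℝ) : ℂ) ^ 2 / 2) =
      n + ((a * s1 : ℝ) : ℂ) * Complex.I - ((a ^ 2 * s2 : ℝ) : ℂ) / 2 := by
    rw [Finset.sum_sub_distrib, Finset.sum_add_distrib, hs1, hs2, Finset.mul_sum, Finset.mul_sum]
    push_cast
    rw [Finset.sum_mul, Finset.sum_div]
    simp [mul_pow]
  rw [Finset.sum_sub_distrib, ← Finset.mul_sum, hQ] at hsum
  have hdec : (n : ℝ)⁻¹ • ∑ x, ee (a * phase w (step x L)) -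
      ee (a * Φ) * ((1 - a ^ 2 * v / 2 : ℝ) : ℂ) =
      (n : ℝ)⁻¹ • ((∑ x, ee (a * phase w (step x L)) - ee (a * Φ) *
        (n + ((a * s1 : ℝ) : ℂ) * Complex.I - ((a ^ 2 * s2 : ℝ) : ℂ) / 2)) +
        (ee (a * Φ) * (((a * s1 : ℝ) : ℂ) * Complex.I) -
        ee (a * Φ) * ((a ^ 2 * (s2 - n * v) / 2 : ℝ) : ℂ))) := by
    have hnc : (n : ℂ) ≠ 0 := by exact_mod_cast hn.ne'
    simp only [Complex.real_smul]
    push_cast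
    field_simp
    ring
  rw [hdec, norm_smul, Real.norm_of_nonneg (by positivity)]
  have hb1 : ‖ee (a * Φ) * (((a * s1 : ℝ) : ℂ) * Complex.I)‖ ≤ |a| := by
    rw [norm_mul, norm_ee, one_mul, norm_mul, Complex.norm_I, mul_one, Complex.norm_real,
      Real.norm_eq_abs, abs_mul]
    exact mul_le_of_le_one_right (abs_nonneg _) (by linarith)
  have hb2 : ‖ee (a * Φ) * ((a ^ 2 * (s2 - n * v) / 2 : ℝ) : ℂ)‖ ≤ a ^ 2 := by
    rw [norm_mul, norm_ee, one_mul, Complex.norm_real, Real.norm_eq_abs, abs_div, abs_mul,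
      abs_of_nonneg (sq_nonneg a), abs_two]
    have : a ^ 2 * |s2 - n * v| ≤ a ^ 2 := mul_le_of_le_one_right (sq_nonneg _) hs2'
    have := sq_nonneg a
    linarith
  have hfin := norm_add_le_of_le hsum (norm_sub_le_of_le hb1 hb2)
  calc _ ≤ (n : ℝ)⁻¹ * (n * |a| ^ 3 + |a| + (|a| + a ^ 2)) := by gcongr
    _ = _ := by field_simp; ring

/-- Expectation over `j` steps of the chain. -/
noncomputable def Ex {E : Type*} [AddCommGroup E] [Module ℝ E] (n : ℕ) :
    ℕ → (List (Fin n) → E) → E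
  | 0, f => f []
  | j + 1, f => Ex n j (fun L => (n : ℝ)⁻¹ • ∑ x, f (step x L))

lemma Ex_sub {E : Type*} [AddCommGroup E] [Module ℝ E] (n : ℕ) : ∀ (j : ℕ) (f g : List (Fin n) → E),
    Ex n j (fun L => f L - g L) = Ex n j f - Ex n j g
  | 0, f, g => rfl
  | j + 1, f, g => by
    simp only [Ex, Finset.sum_sub_distrib, smul_sub]
    exact Ex_sub n j _ _

lemma Ex_add {E : Type*} [AddCommGroup E] [Module ℝ E] (n : ℕ) : ∀ (j : ℕ) (f g : List (Fin n) → E),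
    Ex n j (fun L => f L + g L) = Ex n j f + Ex n j g
  | 0, f, g => rfl
  | j + 1, f, g => by
    simp only [Ex, Finset.sum_add_distrib, smul_add]
    exact Ex_add n j _ _

lemma Ex_smul {E : Type*} [AddCommGroup E] [Module ℝ E] (n : ℕ) (k : ℝ) :
    ∀ (j : ℕ) (f : List (Fin n) → E), Ex n j (fun L => k • f L) = k • Ex n j f
  | 0, f => rfl
  | j + 1, f => by
    simp only [Ex, ← Finset.smul_sum, smul_comm _ k]
    exact Ex_smul n k j _

lemma Ex_const {E : Type*} [AddCommGroup E] [Module ℝ E] {n : ℕ} (hn : 0 < n) (k : E) :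
    ∀ (j : ℕ), Ex n j (fun _ => k) = k
  | 0 => rfl
  | j + 1 => by
    have hn0 : (n : ℝ) ≠ 0 := by positivity
    have : (n : ℝ)⁻¹ • ∑ _x : Fin n, k = k := by
      rw [Finset.sum_const, Finset.card_univ, Fintype.card_fin, ← Nat.cast_smul_eq_nsmul ℝ,
        smul_smul, inv_mul_cancel₀ hn0, one_smul]
    simp only [Ex, this]
    exact Ex_const hn k j

lemma Ex_mono (n : ℕ) : ∀ (j : ℕ) (f g : List (Fin n) → ℝ), (∀ L, f L ≤ g L) →
    Ex n j f ≤ Ex n j g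
  | 0, f, g, h => h []
  | j + 1, f, g, h => by
    simp only [Ex]
    apply Ex_mono n j
    intro L
    exact smul_le_smul_of_nonneg_left (Finset.sum_le_sum fun x _ => h _) (by positivity)

lemma norm_Ex_le (n : ℕ) : ∀ (j : ℕ) (f : List (Fin n) → ℂ) (g : List (Fin n) → ℝ),
    (∀ L, ‖f L‖ ≤ g L) → ‖Ex n j f‖ ≤ Ex n j g
  | 0, f, g, h => h []
  | j + 1, f, g, h => by
    simp only [Ex]
    apply norm_Ex_le n j
    intro L
    rw [norm_smul, Real.norm_of_nonneg (by positivity), smul_eq_mul]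
    gcongr
    exact norm_sum_le_of_le _ fun x _ => h _

lemma Ex_eq_avg {E : Type*} [AddCommGroup E] [Module ℝ E] (n : ℕ) :
    ∀ (j : ℕ) (f : List (Fin n) → E),
    ((n : ℝ) ^ j)⁻¹ • ∑ s : Fin j → Fin n, f (List.ofFn s).dedup = Ex n j f
  | 0, f => by simp [Ex]
  | j + 1, f => by
    rw [Ex, ← Ex_eq_avg n j, ← (Fin.consEquiv (fun _ => Fin n)).sum_comp, Fintype.sum_prod_type,
      Finset.sum_comm, ← Finset.smul_sum, smul_smul]
    congr 1
    · rw [pow_succ, mul_inv]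
    · apply Finset.sum_congr rfl
      intro s _
      apply Finset.sum_congr rfl
      intro x _
      congr 1
      simp only [Fin.consEquiv, Equiv.coe_fn_mk, List.ofFn_cons, step, List.mem_dedup]
      split_ifs with h
      · exact List.dedup_cons_of_mem h
      · exact List.dedup_cons_of_notMem h

/-- Second moment of the number of undiscovered cards. -/
lemma Ex_Y_sq {n : ℕ} (hn : 0 < n) : ∀ j : ℕ,
    Ex n j (fun L => ((Yc L : ℝ) - n * (1 - 1 / n) ^ j) ^ 2) ≤ (j : ℝ)
  | 0 => by simp [Ex, Yc, comp]
  | j + 1 => by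
    have hn0 : (0 : ℝ) < n := by positivity
    have hn1 : (1 : ℝ) ≤ n := by exact_mod_cast hn
    have ih := Ex_Y_sq hn j
    rw [Ex]
    have : Ex n j (fun L => ((Yc L : ℝ) - n * (1 - 1 / n) ^ j) ^ 2 + 1) ≤ (j : ℝ) + 1 := by
      rw [Ex_add, Ex_const hn]; linarith
    push_cast
    refine (Ex_mono n j _ _ ?_).trans this
    intro L
    set Y : ℝ := (Yc L : ℝ) with hY
    have hYn : Y ≤ n := Nat.cast_le.2 (Yc_le L)
    have hY0 : 0 ≤ Y := by positivity
    set m : ℝ := n * (1 - 1 / n) ^ j with hm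
    have hm' : (n : ℝ) * (1 - 1 / n) ^ (j + 1) = m * (1 - 1 / n) := by rw [hm]; ring
    rw [hm']
    have e : ∑ x, ((Yc (step x L) : ℝ) - m * (1 - 1 / n)) ^ 2 =
        (n - Y) * (Y - m * (1 - 1 / n)) ^ 2 + Y * (Y - 1 - m * (1 - 1 / n)) ^ 2 := by
      rw [← Finset.sum_add_sum_compl (comp L), add_comm]
      congr 1
      · have : ∀ x ∈ (comp L)ᶜ, ((Yc (step x L) : ℝ) - m * (1 - 1 / n)) ^ 2 =
            (Y - m * (1 - 1 / n)) ^ 2 := by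
          intro x hx
          rw [Finset.mem_compl, mem_comp, not_not] at hx
          rw [step, if_pos hx]
        rw [Finset.sum_congr rfl this, Finset.sum_const, Finset.card_compl, nsmul_eq_mul,
          Fintype.card_fin, ← Yc, Nat.cast_sub (Yc_le L)]
      · have : ∀ x ∈ (comp L), ((Yc (step x L) : ℝ) - m * (1 - 1 / n)) ^ 2 =
            (Y - 1 - m * (1 - 1 / n)) ^ 2 := by
          intro x hx
          rw [mem_comp] at hx
          rw [step, if_neg hx, hY, ← Yc_cons hx]
          push_cast
          ring
        rw [Finset.sum_congr rfl this, Finset.sum_const, nsmul_eq_mul]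
        rfl
    rw [e, smul_eq_mul]
    set q : ℝ := 1 - 1 / n with hq
    have hp0 : 0 ≤ Y / n := by positivity
    have hp1 : Y / n ≤ 1 := by rw [div_le_one hn0]; exact hYn
    have e2 : (n : ℝ)⁻¹ * ((n - Y) * (Y - m * q) ^ 2 + Y * (Y - 1 - m * q) ^ 2) =
        q ^ 2 * (Y - m) ^ 2 + (Y / n) * (1 - Y / n) := by
      rw [hq]
      field_simp
      ring
    rw [e2]
    have hq0 : 0 ≤ q := by
      rw [hq, sub_nonneg, div_le_one hn0]; exact hn1
    have hq1 : q ≤ 1 := by rw [hq]; linarith [show 0 ≤ 1 / (n : ℝ) by positivity]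
    have a1 : q ^ 2 * (Y - m) ^ 2 ≤ (Y - m) ^ 2 :=
      mul_le_of_le_one_left (sq_nonneg _) (pow_le_one₀ hq0 hq1)
    have a2 : (Y / n) * (1 - Y / n) ≤ 1 := mul_le_one₀ hp1 (by linarith) (by linarith)
    linarith

lemma Ex_Y_abs {n : ℕ} (hn : 0 < n) (j : ℕ) (c : ℝ) (hj : (j : ℝ) ≤ c * n) :
    Ex n j (fun L => |(Yc L : ℝ) / n - (1 - 1 / n) ^ j|) ≤ (c + 1) / (2 * √n) := by
  have hn0 : (0 : ℝ) < n := by positivity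
  have hs : 0 < √(n : ℝ) := Real.sqrt_pos.2 hn0
  have hss : √(n : ℝ) * √n = n := Real.mul_self_sqrt hn0.le
  have h1 : Ex n j (fun L => |(Yc L : ℝ) / n - (1 - 1 / n) ^ j|) ≤
      Ex n j (fun L => (1 / (2 * n * √n)) • ((Yc L : ℝ) - n * (1 - 1 / n) ^ j) ^ 2 + 1 / (2 * √n)) := by
    apply Ex_mono
    intro L
    have e : (Yc L : ℝ) / n - (1 - 1 / n) ^ j = ((Yc L : ℝ) - n * (1 - 1 / n) ^ j) / n := by
      field_simp
    rw [e, abs_div, abs_of_pos hn0, smul_eq_mul]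
    set t := (Yc L : ℝ) - n * (1 - 1 / n) ^ j
    have h := sq_nonneg (|t| - √n)
    have ht : |t| ^ 2 = t ^ 2 := sq_abs t
    have h2 : 2 * |t| * √n ≤ t ^ 2 + n := by nlinarith
    have e2 : 1 / (2 * n * √n) * t ^ 2 + 1 / (2 * √n) = (t ^ 2 + n) / (2 * n * √n) := by
      field_simp
    rw [e2, div_le_div_iff₀ hn0 (by positivity)]
    nlinarith
  refine h1.trans ?_
  rw [Ex_add, Ex_smul, Ex_const hn, smul_eq_mul]
  have h2 := (Ex_Y_sq hn j).trans hj
  calc _ ≤ (1 / (2 * n * √n)) * (c * n) + 1 / (2 * √n) := by gcongr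
    _ = _ := by field_simp

lemma vf_lip (w p p' : ℝ) (hw0 : 0 ≤ w) (hw1 : w ≤ 1) (hp0 : 0 ≤ p) (hp1 : p ≤ 1)
    (hp0' : 0 ≤ p') (hp1' : p' ≤ 1) : |vf w p - vf w p'| ≤ |p - p'| := by
  have e : vf w p - vf w p' = (p - p') * (1 / 12 + w ^ 2 * (1 - p - p') / 4) := by
    unfold vf; ring
  rw [e, abs_mul]
  apply mul_le_of_le_one_right (abs_nonneg _)
  have h1 : w ^ 2 ≤ 1 := pow_le_one₀ hw0 hw1
  have h2 : 0 ≤ w ^ 2 := sq_nonneg w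
  have h3 : |w ^ 2 * (1 - p - p')| ≤ 1 := by
    rw [abs_mul, abs_of_nonneg h2]
    exact mul_le_one₀ h1 (abs_nonneg _) (abs_le.2 ⟨by linarith, by linarith⟩)
  rw [abs_le] at h3 ⊢
  constructor <;> linarith

lemma vf_mem (w p : ℝ) (hw0 : 0 ≤ w) (hw1 : w ≤ 1) (hp0 : 0 ≤ p) (hp1 : p ≤ 1) :
    0 ≤ vf w p ∧ vf w p ≤ 1 := by
  unfold vf
  have h1 : w ^ 2 ≤ 1 := pow_le_one₀ hw0 hw1
  have h2 : 0 ≤ w ^ 2 := sq_nonneg w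
  have h3 : w ^ 2 * p ≤ 1 := mul_le_one₀ h1 hp0 hp1
  have h3' : 0 ≤ w ^ 2 * p := by positivity
  have h4 : w ^ 2 * p * (1 - p) ≤ 1 := mul_le_one₀ h3 (by linarith) (by linarith)
  have h5 : 0 ≤ w ^ 2 * p * (1 - p) := mul_nonneg h3' (by linarith)
  constructor <;> linarith

lemma exp_neg_approx (x : ℝ) (h0 : 0 ≤ x) (h1 : x ≤ 1) : |1 - x - Real.exp (-x)| ≤ x ^ 2 := by
  have := Real.abs_exp_sub_one_sub_id_le (x := -x) (by rw [abs_neg, abs_of_nonneg h0]; exact h1)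
  rw [neg_sq] at this
  rw [abs_sub_comm]
  convert this using 2
  ring

/-- One step of the characteristic function recursion. -/
lemma chain_step {n : ℕ} (hn : 0 < n) (j r : ℕ) (hjr : j < r) (c : ℝ) (hr : (r : ℝ) ≤ c * n)
    (a : ℝ) (ha : |a| ≤ 1) :
    ‖Ex n (j + 1) (fun L => ee (a * phase ((1 - 1 / n) ^ (r - (j + 1))) L)) -
      (Real.exp (-(a ^ 2 * vf ((1 - 1 / n) ^ (r - (j + 1))) ((1 - 1 / n) ^ j) / 2)) : ℝ) •
      Ex n j (fun L => ee (a * phase ((1 - 1 / n) ^ (r - j)) L))‖ ≤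
    |a| ^ 3 + 2 * |a| / n + a ^ 2 / n + a ^ 4 + a ^ 2 * ((c + 1) / (2 * √n)) := by
  have hn0 : (0 : ℝ) < n := by positivity
  have hn1 : (1 : ℝ) ≤ n := by exact_mod_cast hn
  set q : ℝ := 1 - 1 / n with hq
  have hq0 : 0 ≤ q := by
    rw [hq, sub_nonneg, div_le_one hn0]; exact hn1
  have hq1 : q ≤ 1 := by rw [hq]; linarith [show 0 ≤ 1 / (n : ℝ) by positivity]
  set w := q ^ (r - (j + 1)) with hw
  have hw0 : 0 ≤ w := pow_nonneg hq0 _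
  have hw1 : w ≤ 1 := pow_le_one₀ hq0 hq1
  have hw' : q ^ (r - j) = w * q := by
    rw [hw, ← pow_succ]; congr 1; omega
  rw [hw', Ex, ← Ex_smul, ← Ex_sub]
  have hqj0 : 0 ≤ q ^ j := pow_nonneg hq0 _
  have hqj1 : q ^ j ≤ 1 := pow_le_one₀ hq0 hq1
  obtain ⟨hv0, hv1⟩ := vf_mem w (q ^ j) hw0 hw1 hqj0 hqj1
  set v := vf w (q ^ j) with hv
  have ha2 : a ^ 2 ≤ 1 := by rw [← sq_abs]; exact pow_le_one₀ (abs_nonneg _) ha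
  have hx1 : a ^ 2 * v ≤ a ^ 2 := mul_le_of_le_one_right (sq_nonneg _) hv1
  have hx0 : 0 ≤ a ^ 2 * v := by positivity
  have hpt : ∀ L : List (Fin n), ‖(n : ℝ)⁻¹ • ∑ x, ee (a * phase w (step x L)) -
      (Real.exp (-(a ^ 2 * v / 2)) : ℝ) • ee (a * phase (w * q) L)‖ ≤
      (|a| ^ 3 + 2 * |a| / n + a ^ 2 / n + a ^ 4) + a ^ 2 • |(Yc L : ℝ) / n - q ^ j| := by
    intro L
    have h1 := one_step hn L w hw0 hw1 a ha
    have hp0 : 0 ≤ (Yc L : ℝ) / n := by positivity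
    have hp1 : (Yc L : ℝ) / n ≤ 1 := by
      rw [div_le_one hn0]; exact_mod_cast Yc_le L
    have hl := vf_lip w _ _ hw0 hw1 hp0 hp1 hqj0 hqj1
    rw [← hv] at hl
    set u := vf w ((Yc L : ℝ) / n) with hu
    have h2 : ‖ee (a * phase (w * (1 - 1 / n)) L) * ((1 - a ^ 2 * u / 2 : ℝ) : ℂ) -
        (Real.exp (-(a ^ 2 * v / 2)) : ℝ) • ee (a * phase (w * q) L)‖ ≤
        a ^ 4 + a ^ 2 * |(Yc L : ℝ) / n - q ^ j| := by
      rw [Complex.real_smul, mul_comm, ← hq, ← sub_mul, norm_mul, norm_ee, mul_one,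
        ← Complex.ofReal_sub, Complex.norm_real, Real.norm_eq_abs]
      have h3 := exp_neg_approx (a ^ 2 * v / 2) (by linarith) (by linarith)
      have h4 : (a ^ 2 * v / 2) ^ 2 ≤ a ^ 4 := by
        calc _ ≤ (a ^ 2) ^ 2 := by gcongr; linarith
          _ = _ := by ring
      have h5 : a ^ 2 * |u - v| ≤ a ^ 2 * |(Yc L : ℝ) / n - q ^ j| := by gcongr
      have h6 : |a ^ 2 * (u - v) / 2| ≤ a ^ 2 * |u - v| := by
        rw [abs_div, abs_mul, abs_of_nonneg (sq_nonneg a), abs_two]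
        have : 0 ≤ a ^ 2 * |u - v| := by positivity
        linarith
      have e : 1 - a ^ 2 * u / 2 - Real.exp (-(a ^ 2 * v / 2)) =
          (1 - a ^ 2 * v / 2 - Real.exp (-(a ^ 2 * v / 2))) - a ^ 2 * (u - v) / 2 := by ring
      rw [e]
      refine (abs_sub _ _).trans ?_
      linarith
    have := norm_add_le_of_le h1 h2
    rw [sub_add_sub_cancel] at this
    rw [smul_eq_mul]
    linarith
  refine (norm_Ex_le n j _ _ hpt).trans ?_
  rw [Ex_add, Ex_const hn, Ex_smul, smul_eq_mul]
  have hj : (j : ℝ) ≤ c * n := le_trans (by exact_mod_cast hjr.le) hr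
  have := Ex_Y_abs hn j c hj
  gcongr

lemma chain_bound {n : ℕ} (hn : 0 < n) (r : ℕ) (c : ℝ) (hr : (r : ℝ) ≤ c * n)
    (a : ℝ) (ha : |a| ≤ 1) : ∀ j ≤ r,
    ‖Ex n j (fun L => ee (a * phase ((1 - 1 / n) ^ (r - j)) L)) -
      (Real.exp (-(a ^ 2 / 2 * ∑ i ∈ Finset.range j,
        vf ((1 - 1 / n) ^ (r - (i + 1))) ((1 - 1 / n) ^ i))) : ℝ) •
      ee (a * ((1 - (1 - 1 / n) ^ r) * n / 2))‖ ≤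
    j * (|a| ^ 3 + 2 * |a| / n + a ^ 2 / n + a ^ 4 + a ^ 2 * ((c + 1) / (2 * √n)))
  | 0, _ => by
    simp [Ex, phase, revDes, rk, Yc, comp]
  | j + 1, hj => by
    have ih := chain_bound hn r c hr a ha j (by omega)
    have hs := chain_step hn j r (by omega) c hr a ha
    set B := |a| ^ 3 + 2 * |a| / n + a ^ 2 / n + a ^ 4 + a ^ 2 * ((c + 1) / (2 * √n))
    set v := vf ((1 - 1 / (n : ℝ)) ^ (r - (j + 1))) ((1 - 1 / n) ^ j) with hv
    have hn0 : (0 : ℝ) < n := by positivity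
    have hn1 : (1 : ℝ) ≤ n := by exact_mod_cast hn
    have hq0 : 0 ≤ 1 - 1 / (n : ℝ) := by
      rw [sub_nonneg, div_le_one hn0]; exact hn1
    have hq1 : 1 - 1 / (n : ℝ) ≤ 1 := by linarith [show 0 ≤ 1 / (n : ℝ) by positivity]
    have hv0 : 0 ≤ v := (vf_mem _ _ (pow_nonneg hq0 _) (pow_le_one₀ hq0 hq1) (pow_nonneg hq0 _)
      (pow_le_one₀ hq0 hq1)).1
    have he : Real.exp (-(a ^ 2 * v / 2)) ≤ 1 := by
      rw [Real.exp_le_one_iff]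
      have : 0 ≤ a ^ 2 * v := by positivity
      linarith
    have h2 : ‖(Real.exp (-(a ^ 2 * v / 2)) : ℝ) •
        (Ex n j (fun L => ee (a * phase ((1 - 1 / n) ^ (r - j)) L)) -
      (Real.exp (-(a ^ 2 / 2 * ∑ i ∈ Finset.range j,
        vf ((1 - 1 / n) ^ (r - (i + 1))) ((1 - 1 / n) ^ i))) : ℝ) •
      ee (a * ((1 - (1 - 1 / n) ^ r) * n / 2)))‖ ≤ j * B := by
      rw [norm_smul, Real.norm_of_nonneg (Real.exp_pos _).le]
      exact (mul_le_of_le_one_left (norm_nonneg _) he).trans ih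
    rw [smul_sub, smul_smul, ← Real.exp_add] at h2
    have h3 := norm_add_le_of_le hs h2
    rw [sub_add_sub_cancel] at h3
    rw [Finset.sum_range_succ]
    have e : -(a ^ 2 * v / 2) + -(a ^ 2 / 2 * ∑ i ∈ Finset.range j,
        vf ((1 - 1 / (n : ℝ)) ^ (r - (i + 1))) ((1 - 1 / n) ^ i)) = -(a ^ 2 / 2 *
        (∑ i ∈ Finset.range j, vf ((1 - 1 / (n : ℝ)) ^ (r - (i + 1))) ((1 - 1 / n) ^ i) + v)) := by
      ring
    rw [e] at h3
    refine h3.trans (le_of_eq ?_)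
    push_cast
    ring


lemma pow_sub_pow_abs (x y : ℝ) (hx0 : 0 ≤ x) (hx1 : x ≤ 1) (hy0 : 0 ≤ y) (hy1 : y ≤ 1) :
    ∀ r : ℕ, |x ^ r - y ^ r| ≤ r * |x - y|
  | 0 => by simp
  | r + 1 => by
    have ih := pow_sub_pow_abs x y hx0 hx1 hy0 hy1 r
    have e : x ^ (r + 1) - y ^ (r + 1) = x * (x ^ r - y ^ r) + (x - y) * y ^ r := by ring
    rw [e]
    refine (abs_add_le _ _).trans ?_
    rw [abs_mul, abs_mul, abs_of_nonneg hx0, abs_of_nonneg (pow_nonneg hy0 r)]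
    have h1 : x * |x ^ r - y ^ r| ≤ |x ^ r - y ^ r| := mul_le_of_le_one_left (abs_nonneg _) hx1
    have h2 : |x - y| * y ^ r ≤ |x - y| :=
      mul_le_of_le_one_right (abs_nonneg _) (pow_le_one₀ hy0 hy1)
    push_cast
    linarith

lemma qr_bound {n : ℕ} (hn : 0 < n) (c : ℝ) (hc : 0 < c) :
    |(1 - 1 / (n : ℝ)) ^ ⌊c * (n : ℝ)⌋₊ - Real.exp (-c)| ≤ (c + 1) / n := by
  have hn0 : (0 : ℝ) < n := by positivity
  have hn1 : (1 : ℝ) ≤ n := by exact_mod_cast hn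
  have hi0 : 0 ≤ 1 / (n : ℝ) := by positivity
  have hi1 : 1 / (n : ℝ) ≤ 1 := by rw [div_le_one hn0]; exact hn1
  set r := ⌊c * (n : ℝ)⌋₊ with hr
  have hr1 : (r : ℝ) ≤ c * n := Nat.floor_le (by positivity)
  have hr2 : c * n < r + 1 := Nat.lt_floor_add_one _
  have h1 := exp_neg_approx (1 / n) hi0 hi1
  have he0 : 0 ≤ Real.exp (-(1 / (n : ℝ))) := (Real.exp_pos _).le
  have he1 : Real.exp (-(1 / (n : ℝ))) ≤ 1 := by rw [Real.exp_le_one_iff]; linarith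
  have h2 := pow_sub_pow_abs (1 - 1 / n) (Real.exp (-(1 / (n : ℝ)))) (by linarith) (by linarith)
    he0 he1 r
  rw [← Real.exp_nat_mul] at h2
  have h3 : (r : ℝ) * |1 - 1 / (n : ℝ) - Real.exp (-(1 / (n : ℝ)))| ≤ c / n := by
    calc _ ≤ (c * n) * (1 / (n : ℝ)) ^ 2 := by gcongr
      _ = _ := by field_simp
  set y := (r : ℝ) * -(1 / (n : ℝ)) with hy
  have hyc : -c ≤ y := by
    rw [hy, mul_neg, neg_le_neg_iff, mul_one_div, div_le_iff₀ hn0]; exact hr1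
  have hyc2 : y ≤ -c + 1 / n := by
    have : c - 1 / n ≤ r * (1 / (n : ℝ)) := by
      rw [mul_one_div, le_div_iff₀ hn0, sub_mul, one_div, inv_mul_cancel₀ hn0.ne']
      linarith
    rw [hy]; linarith
  have hy0 : y ≤ 0 := by
    rw [hy]
    have : 0 ≤ (r : ℝ) * (1 / (n : ℝ)) := by positivity
    linarith
  have h4 : |Real.exp y - Real.exp (-c)| ≤ 1 / n := by
    rw [abs_of_nonneg (sub_nonneg.2 (Real.exp_le_exp.2 hyc))]
    have h5 : Real.exp (-c) = Real.exp y * Real.exp (-c - y) := by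
      rw [← Real.exp_add]; ring_nf
    have h6 := Real.add_one_le_exp (-c - y)
    have h7 : Real.exp y ≤ 1 := by rw [Real.exp_le_one_iff]; exact hy0
    have h8 := (Real.exp_pos y).le
    have h9 : Real.exp y * (y + c) ≤ y + c := mul_le_of_le_one_left (by linarith) h7
    nlinarith
  have h10 := abs_sub_le ((1 - 1 / (n : ℝ)) ^ r) (Real.exp y) (Real.exp (-c))
  rw [add_div]
  linarith

lemma sum_vf {n : ℕ} (hn : 0 < n) (r : ℕ) :
    (1 / (n : ℝ)) * ∑ i ∈ Finset.range r,
      vf ((1 - 1 / (n : ℝ)) ^ (r - (i + 1))) ((1 - 1 / n) ^ i) =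
    (1 - (1 - 1 / (n : ℝ)) ^ r) / 12 + ((1 - 1 / (n : ℝ)) ^ (r - 1) * (1 - (1 - 1 / (n : ℝ)) ^ r)
      - r / n * ((1 - 1 / (n : ℝ)) ^ (r - 1)) ^ 2) / 4 := by
  have hn0 : (n : ℝ) ≠ 0 := by positivity
  set q := 1 - 1 / (n : ℝ) with hq
  have hg : ∑ i ∈ Finset.range r, q ^ i = n * (1 - q ^ r) := by
    have := geom_sum_mul_neg q r
    have h1 : 1 - q = 1 / n := by rw [hq]; ring
    rw [h1] at this
    rw [← this]
    field_simp
  have hg2 : ∑ i ∈ Finset.range r, q ^ (r - 1 - i) = n * (1 - q ^ r) := by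
    rw [Finset.sum_range_reflect (fun i => q ^ i) r, hg]
  have ht : ∀ i ∈ Finset.range r, vf (q ^ (r - (i + 1))) (q ^ i) =
      q ^ i / 12 + (q ^ (r - 1) / 4) * q ^ (r - 1 - i) - (q ^ (r - 1)) ^ 2 / 4 := by
    intro i hi
    have hi' := Finset.mem_range.1 hi
    have e1 : r - (i + 1) = r - 1 - i := by omega
    have e2 : q ^ (r - 1) = q ^ (r - 1 - i) * q ^ i := by
      rw [← pow_add]; congr 1; omega
    rw [e1, e2]
    unfold vf
    ring
  rw [Finset.sum_congr rfl ht, Finset.sum_sub_distrib, Finset.sum_add_distrib, ← Finset.sum_div,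
    ← Finset.mul_sum, hg, hg2]
  simp only [Finset.sum_const, Finset.card_range, nsmul_eq_mul]
  field_simp
  ring

lemma tendsto_q : Tendsto (fun n : ℕ => 1 - 1 / (n : ℝ)) atTop (𝓝 1) := by
  have := (tendsto_one_div_atTop_nhds_zero_nat (𝕜 := ℝ)).const_sub 1
  simpa using this

lemma tendsto_qr (c : ℝ) (hc : 0 < c) :
    Tendsto (fun n : ℕ => (1 - 1 / (n : ℝ)) ^ ⌊c * (n : ℝ)⌋₊) atTop (𝓝 (Real.exp (-c))) := by
  rw [tendsto_iff_norm_sub_tendsto_zero]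
  refine squeeze_zero' (Eventually.of_forall fun _ => norm_nonneg _) ?_
    (tendsto_const_div_atTop_nhds_zero_nat (c + 1))
  filter_upwards [eventually_gt_atTop 0] with n hn
  exact qr_bound hn c hc

lemma tendsto_rn (c : ℝ) (hc : 0 < c) :
    Tendsto (fun n : ℕ => (⌊c * (n : ℝ)⌋₊ : ℝ) / n) atTop (𝓝 c) := by
  exact (tendsto_nat_floor_mul_div_atTop hc.le).comp tendsto_natCast_atTop_atTop

lemma tendsto_qr1 (c : ℝ) (hc : 0 < c) :
    Tendsto (fun n : ℕ => (1 - 1 / (n : ℝ)) ^ (⌊c * (n : ℝ)⌋₊ - 1)) atTop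
      (𝓝 (Real.exp (-c))) := by
  have h := (tendsto_qr c hc).div tendsto_q one_ne_zero
  rw [div_one] at h
  refine h.congr' ?_
  have hfl : Tendsto (fun n : ℕ => ⌊c * (n : ℝ)⌋₊) atTop atTop :=
    tendsto_nat_floor_atTop.comp (tendsto_natCast_atTop_atTop.const_mul_atTop hc)
  filter_upwards [eventually_gt_atTop 1, hfl.eventually_ge_atTop 1] with n hn hr
  have hn1 : (1 : ℝ) < n := by exact_mod_cast hn
  have hq : 1 - 1 / (n : ℝ) ≠ 0 := by
    have : 1 / (n : ℝ) < 1 := by rw [div_lt_one (by linarith)]; exact hn1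
    linarith
  simp only [Pi.div_apply]
  rw [div_eq_iff hq, ← pow_succ, Nat.sub_add_cancel hr]

lemma tendsto_var (c : ℝ) (hc : 0 < c) :
    Tendsto (fun n : ℕ => (1 / (n : ℝ)) * ∑ i ∈ Finset.range ⌊c * (n : ℝ)⌋₊,
      vf ((1 - 1 / (n : ℝ)) ^ (⌊c * (n : ℝ)⌋₊ - (i + 1))) ((1 - 1 / n) ^ i)) atTop
    (𝓝 ((1 + 2 * Real.exp (-c) - 3 * (1 + c) * Real.exp (-2 * c)) / 12)) := by
  have h1 := tendsto_qr c hc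
  have h2 := tendsto_qr1 c hc
  have h3 := tendsto_rn c hc
  have h := ((h1.const_sub 1).div_const 12).add
    (((h2.mul (h1.const_sub 1)).sub (h3.mul (h2.pow 2))).div_const 4)
  have e : (1 - Real.exp (-c)) / 12 + (Real.exp (-c) * (1 - Real.exp (-c)) -
      c * Real.exp (-c) ^ 2) / 4 =
      (1 + 2 * Real.exp (-c) - 3 * (1 + c) * Real.exp (-2 * c)) / 12 := by
    have : Real.exp (-2 * c) = Real.exp (-c) ^ 2 := by
      rw [← Real.exp_nat_mul]; congr 1; push_cast; ring
    rw [this]; ring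
  rw [e] at h
  refine h.congr' ?_
  filter_upwards [eventually_gt_atTop 0] with n hn
  exact (sum_vf hn _).symm

lemma var_nonneg (c : ℝ) (hc : 0 < c) :
    0 ≤ (1 + 2 * Real.exp (-c) - 3 * (1 + c) * Real.exp (-2 * c)) / 12 := by
  refine ge_of_tendsto (tendsto_var c hc) ?_
  filter_upwards [eventually_gt_atTop 0] with n hn
  have hn0 : (0 : ℝ) < n := by positivity
  have hn1 : (1 : ℝ) ≤ n := by exact_mod_cast hn
  have hq0 : 0 ≤ 1 - 1 / (n : ℝ) := by
    rw [sub_nonneg, div_le_one hn0]; exact hn1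
  have hq1 : 1 - 1 / (n : ℝ) ≤ 1 := by linarith [show 0 ≤ 1 / (n : ℝ) by positivity]
  apply mul_nonneg (by positivity)
  apply Finset.sum_nonneg
  intro i _
  exact (vf_mem _ _ (pow_nonneg hq0 _) (pow_le_one₀ hq0 hq1) (pow_nonneg hq0 _)
      (pow_le_one₀ hq0 hq1)).1

lemma phase_one_approx {n r : ℕ} (s : Fin r → Fin n) :
    |(descentCount (rttPerm n r s) : ℝ) - phase 1 (List.ofFn s).dedup| ≤ 1 := by
  obtain ⟨h1, h2⟩ := descent_approx s
  set L := (List.ofFn s).dedup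
  have h1' : (revDes L : ℝ) ≤ descentCount (rttPerm n r s) := by exact_mod_cast h1
  have h2' : (descentCount (rttPerm n r s) : ℝ) ≤ revDes L + 1 := by exact_mod_cast h2
  have h3 : 0 ≤ (rk L : ℝ) / Yc L := by positivity
  have h4 : (rk L : ℝ) / Yc L ≤ 1 := div_le_one_of_le₀ (by exact_mod_cast rk_le L) (by positivity)
  unfold phase
  rw [abs_le]
  constructor <;> linarith

lemma cf_bound {n : ℕ} (hn : 0 < n) (c : ℝ) (hc : 0 < c) (a : ℝ) (ha : |a| ≤ 1) :
    ‖((n : ℝ) ^ ⌊c * (n : ℝ)⌋₊)⁻¹ • ∑ s : Fin ⌊c * (n : ℝ)⌋₊ → Fin n,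
      ee (a * (descentCount (rttPerm n ⌊c * (n : ℝ)⌋₊ s) - n * (1 - Real.exp (-c)) / 2)) -
      (Real.exp (-(a ^ 2 / 2 * ∑ i ∈ Finset.range ⌊c * (n : ℝ)⌋₊,
        vf ((1 - 1 / n) ^ (⌊c * (n : ℝ)⌋₊ - (i + 1))) ((1 - 1 / n) ^ i))) : ℝ)‖ ≤
    |a| + (c * n * (|a| ^ 3 + 2 * |a| / n + a ^ 2 / n + a ^ 4 + a ^ 2 * ((c + 1) / (2 * √n)))
      + |a| * (c + 1)) := by
  have hn0 : (0 : ℝ) < n := by positivity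
  have hqr := qr_bound hn c hc
  set r := ⌊c * (n : ℝ)⌋₊ with hr
  have hr1 : (r : ℝ) ≤ c * n := Nat.floor_le (by positivity)
  set μ := (n : ℝ) * (1 - Real.exp (-c)) / 2 with hμ
  have hch := chain_bound hn r c hr1 a ha r le_rfl
  rw [Nat.sub_self, pow_zero] at hch
  set V := Real.exp (-(a ^ 2 / 2 * ∑ i ∈ Finset.range r,
        vf ((1 - 1 / n) ^ (r - (i + 1))) ((1 - 1 / n) ^ i))) with hV
  have hV1 : 0 ≤ V := (Real.exp_pos _).le
  set B := |a| ^ 3 + 2 * |a| / n + a ^ 2 / n + a ^ 4 + a ^ 2 * ((c + 1) / (2 * √n)) with hB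
  have hB0 : 0 ≤ B := by positivity
  -- first comparison
  have h1 : ‖((n : ℝ) ^ r)⁻¹ • ∑ s : Fin r → Fin n, ee (a * (descentCount (rttPerm n r s) - μ)) -
      ((n : ℝ) ^ r)⁻¹ • ∑ s : Fin r → Fin n, ee (a * (phase 1 (List.ofFn s).dedup - μ))‖ ≤ |a| := by
    rw [← smul_sub, ← Finset.sum_sub_distrib, norm_smul, Real.norm_of_nonneg (by positivity)]
    have hpt : ∀ s : Fin r → Fin n, ‖ee (a * (descentCount (rttPerm n r s) - μ)) -
        ee (a * (phase 1 (List.ofFn s).dedup - μ))‖ ≤ |a| := by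
      intro s
      have := norm_ee_sub (a * (phase 1 (List.ofFn s).dedup - μ))
        (a * (descentCount (rttPerm n r s) - phase 1 (List.ofFn s).dedup))
      rw [← mul_add, sub_add_sub_cancel'] at this
      have e : (phase 1 (List.ofFn s).dedup - μ) + ((descentCount (rttPerm n r s) : ℝ) -
        phase 1 (List.ofFn s).dedup) = descentCount (rttPerm n r s) - μ := by ring
      refine this.trans ?_
      rw [abs_mul]
      exact mul_le_of_le_one_right (abs_nonneg _) (phase_one_approx s)
    have := norm_sum_le_of_le Finset.univ (fun s _ => hpt s)
    rw [Finset.sum_const, Finset.card_univ, Fintype.card_fun, Fintype.card_fin, Fintype.card_fin,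
      nsmul_eq_mul, Nat.cast_pow] at this
    calc _ ≤ ((n : ℝ) ^ r)⁻¹ * ((n : ℝ) ^ r * |a|) := by gcongr
      _ = |a| := by field_simp
  have h2 : ((n : ℝ) ^ r)⁻¹ • ∑ s : Fin r → Fin n, ee (a * (phase 1 (List.ofFn s).dedup - μ)) =
      Ex n r (fun L => ee (a * phase 1 L)) * ee (-(a * μ)) := by
    rw [← Ex_eq_avg, smul_mul_assoc, Finset.sum_mul]
    congr 1
    apply Finset.sum_congr rfl
    intro s _
    rw [← ee_add]
    congr 1
    ring
  rw [h2] at h1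
  have h3 : ‖Ex n r (fun L => ee (a * phase 1 L)) * ee (-(a * μ)) -
      (V • ee (a * ((1 - (1 - 1 / n) ^ r) * n / 2))) * ee (-(a * μ))‖ ≤ c * n * B := by
    rw [← sub_mul, norm_mul, norm_ee, mul_one]
    exact hch.trans (by gcongr)
  have h4 : ‖(V • ee (a * ((1 - (1 - 1 / n) ^ r) * n / 2))) * ee (-(a * μ)) - (V : ℂ)‖ ≤
      |a| * (c + 1) := by
    rw [smul_mul_assoc, ← ee_add, Complex.real_smul]
    have hV2 : V ≤ 1 := by
      rw [hV, Real.exp_le_one_iff]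
      have hn1 : (1 : ℝ) ≤ n := by exact_mod_cast hn
      have hq0 : 0 ≤ 1 - 1 / (n : ℝ) := by
        rw [sub_nonneg, div_le_one hn0]; exact hn1
      have hq1 : 1 - 1 / (n : ℝ) ≤ 1 := by linarith [show 0 ≤ 1 / (n : ℝ) by positivity]
      have : 0 ≤ ∑ i ∈ Finset.range r, vf ((1 - 1 / (n : ℝ)) ^ (r - (i + 1))) ((1 - 1 / n) ^ i) := by
        apply Finset.sum_nonneg
        intro i _
        exact (vf_mem _ _ (pow_nonneg hq0 _) (pow_le_one₀ hq0 hq1) (pow_nonneg hq0 _)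
          (pow_le_one₀ hq0 hq1)).1
      have : 0 ≤ a ^ 2 / 2 * ∑ i ∈ Finset.range r,
        vf ((1 - 1 / (n : ℝ)) ^ (r - (i + 1))) ((1 - 1 / n) ^ i) := by positivity
      linarith
    set z := a * ((1 - (1 - 1 / (n : ℝ)) ^ r) * n / 2) + -(a * μ) with hz
    have e : (V : ℂ) * ee z - V = V * (ee (0 + z) - ee 0) := by
      have : ee 0 = 1 := by simp [ee]
      rw [zero_add, this]; ring
    rw [e, norm_mul, Complex.norm_real, Real.norm_of_nonneg hV1]
    refine (mul_le_of_le_one_left (norm_nonneg _) hV2).trans ((norm_ee_sub _ _).trans ?_)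
    have e2 : z = a * (-((1 - 1 / (n : ℝ)) ^ r - Real.exp (-c)) * n / 2) := by
      rw [hz, hμ]; ring
    rw [e2, abs_mul, abs_div, abs_mul, abs_neg, abs_two, abs_of_pos hn0]
    rw [le_div_iff₀ hn0] at hqr
    have : 0 ≤ |(1 - 1 / (n : ℝ)) ^ r - Real.exp (-c)| * n := by positivity
    gcongr
    linarith
  have h5 := norm_add_le_of_le h1 (norm_add_le_of_le h3 h4)
  rw [sub_add_sub_cancel, sub_add_sub_cancel] at h5
  exact h5

lemma tendsto_cf (c : ℝ) (hc : 0 < c) (t : ℝ) :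
    Tendsto (fun n : ℕ => ((n : ℝ) ^ ⌊c * (n : ℝ)⌋₊)⁻¹ • ∑ s : Fin ⌊c * (n : ℝ)⌋₊ → Fin n,
      ee (t * ((descentCount (rttPerm n ⌊c * (n : ℝ)⌋₊ s) - n * (1 - Real.exp (-c)) / 2) / √n)))
    atTop (𝓝 ((Real.exp (-(t ^ 2 / 2 *
      ((1 + 2 * Real.exp (-c) - 3 * (1 + c) * Real.exp (-2 * c)) / 12))) : ℝ) : ℂ)) := by
  have hh : Tendsto (fun n : ℕ => (√(n : ℝ))⁻¹) atTop (𝓝 0) :=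
    tendsto_inv_atTop_zero.comp (Real.tendsto_sqrt_atTop.comp tendsto_natCast_atTop_atTop)
  have hG : Tendsto (fun n : ℕ => ((Real.exp (-(t ^ 2 / 2 * ((1 / (n : ℝ)) * 
      ∑ i ∈ Finset.range ⌊c * (n : ℝ)⌋₊,
        vf ((1 - 1 / n) ^ (⌊c * (n : ℝ)⌋₊ - (i + 1))) ((1 - 1 / n) ^ i)))) : ℝ) : ℂ)) atTop
      (𝓝 ((Real.exp (-(t ^ 2 / 2 *
      ((1 + 2 * Real.exp (-c) - 3 * (1 + c) * Real.exp (-2 * c)) / 12))) : ℝ) : ℂ)) := by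
    apply (Complex.continuous_ofReal.tendsto _).comp
    apply (Real.continuous_exp.tendsto _).comp
    exact ((tendsto_var c hc).const_mul _).neg
  set P : ℝ → ℝ := fun h => |t| * h + (c * (|t| ^ 3 * h + 2 * |t| * h + t ^ 2 * h ^ 2 +
    t ^ 4 * h ^ 2 + t ^ 2 * ((c + 1) / 2 * h)) + |t| * h * (c + 1)) with hP
  have hPt : Tendsto (fun n : ℕ => P (√(n : ℝ))⁻¹) atTop (𝓝 0) := by
    have hcont : Continuous P := by rw [hP]; fun_prop
    have := (hcont.tendsto 0).comp hh
    have h0 : P 0 = 0 := by simp [hP]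
    rw [h0] at this
    exact this
  have hdiff := squeeze_zero_norm' (a := fun n : ℕ => P (√(n : ℝ))⁻¹) (f := fun n : ℕ =>
    ((n : ℝ) ^ ⌊c * (n : ℝ)⌋₊)⁻¹ • ∑ s : Fin ⌊c * (n : ℝ)⌋₊ → Fin n,
      ee (t * ((descentCount (rttPerm n ⌊c * (n : ℝ)⌋₊ s) - n * (1 - Real.exp (-c)) / 2) / √n)) -
     ((Real.exp (-(t ^ 2 / 2 * ((1 / (n : ℝ)) * ∑ i ∈ Finset.range ⌊c * (n : ℝ)⌋₊,
        vf ((1 - 1 / n) ^ (⌊c * (n : ℝ)⌋₊ - (i + 1))) ((1 - 1 / n) ^ i)))) : ℝ) : ℂ))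
     (t₀ := atTop) ?_ hPt
  · have := hdiff.add hG
    simpa using this
  · have hsm : ∀ᶠ n : ℕ in atTop, |t * (√(n : ℝ))⁻¹| ≤ 1 := by
      have h1 : Tendsto (fun n : ℕ => |t * (√(n : ℝ))⁻¹|) atTop (𝓝 0) := by
        have := (hh.const_mul t).abs
        simpa using this
      exact (h1.eventually (gt_mem_nhds one_pos)).mono fun _ h => h.le
    filter_upwards [eventually_gt_atTop 0, hsm] with n hn ha
    have hn0 : (0 : ℝ) < n := by positivity
    have hs : 0 < √(n : ℝ) := Real.sqrt_pos.2 hn0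
    have hss : (n : ℝ) = √(n : ℝ) ^ 2 := (Real.sq_sqrt hn0.le).symm
    have hb := cf_bound hn c hc (t * (√(n : ℝ))⁻¹) ha
    have e1 : ∀ y : ℝ, t * (√(n : ℝ))⁻¹ * y = t * (y / √n) := by intro y; ring
    have e2 : (t * (√(n : ℝ))⁻¹) ^ 2 / 2 = t ^ 2 / 2 * (1 / n) := by
      rw [mul_pow, inv_pow, ← hss]; ring
    simp_rw [e1] at hb
    rw [e2, mul_assoc (t ^ 2 / 2)] at hb
    refine hb.trans (le_of_eq ?_)
    rw [hP, abs_mul, abs_of_pos (inv_pos.2 hs)]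
    simp only
    clear hb e1 e2 ha hsm
    generalize √(n : ℝ) = k at hs hss ⊢
    rw [hss]
    have hk : k ≠ 0 := hs.ne'
    field_simp

end RTT

open RTT

theorem rtt_descents_critical (c : ℝ) (hc : 0 < c) :
    ∀ g : BoundedContinuousFunction ℝ ℝ,
      Tendsto
        (fun n : ℕ =>
          unifExpect (fun s : Fin ⌊c * (n : ℝ)⌋₊ → Fin n =>
            g (((descentCount (rttPerm n ⌊c * (n : ℝ)⌋₊ s) : ℝ) -
                  (n : ℝ) * (1 - Real.exp (-c)) / 2) / Real.sqrt n)))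
        atTop
        (𝓝 (∫ x, g x ∂(gaussianReal 0
          (Real.toNNReal ((1 + 2 * Real.exp (-c) - 3 * (1 + c) * Real.exp (-2 * c)) / 12))))) := by
  intro g
  rw [← tendsto_add_atTop_iff_nat 1]
  set X : (n : ℕ) → (Fin ⌊c * (n : ℝ)⌋₊ → Fin n) → ℝ := fun n s =>
    ((descentCount (rttPerm n ⌊c * (n : ℝ)⌋₊ s) : ℝ) -
                  (n : ℝ) * (1 - Real.exp (-c)) / 2) / Real.sqrt n with hX
  set P : (n : ℕ) → Measure (Fin ⌊c * ((n + 1 : ℕ) : ℝ)⌋₊ → Fin (n + 1)) := fun n =>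
    (PMF.uniformOfFintype (Fin ⌊c * ((n + 1 : ℕ) : ℝ)⌋₊ → Fin (n + 1))).toMeasure with hP
  have hXm : ∀ n, Measurable (X n) := fun n => measurable_of_finite _
  have hPp : ∀ n, IsProbabilityMeasure (P n) := fun n => PMF.toMeasure.isProbabilityMeasure _
  have hMp : ∀ n, IsProbabilityMeasure ((P n).map (X (n + 1))) := fun n =>
    Measure.isProbabilityMeasure_map (hXm _).aemeasurable
  set M : ℕ → ProbabilityMeasure ℝ := fun n => ⟨(P n).map (X (n + 1)), hMp n⟩ with hM
  set M0 : ProbabilityMeasure ℝ := ⟨gaussianReal 0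
    (Real.toNNReal ((1 + 2 * Real.exp (-c) - 3 * (1 + c) * Real.exp (-2 * c)) / 12)),
    inferInstance⟩ with hM0
  have hw : ∀ n (s : Fin ⌊c * ((n + 1 : ℕ) : ℝ)⌋₊ → Fin (n + 1)),
      ((PMF.uniformOfFintype (Fin ⌊c * ((n + 1 : ℕ) : ℝ)⌋₊ → Fin (n + 1))) s).toReal =
      (((n + 1 : ℕ) : ℝ) ^ ⌊c * ((n + 1 : ℕ) : ℝ)⌋₊)⁻¹ := by
    intro n s
    rw [PMF.uniformOfFintype_apply, ENNReal.toReal_inv, ENNReal.toReal_natCast, Fintype.card_fun,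
      Fintype.card_fin, Fintype.card_fin, Nat.cast_pow]
  have hconv : Tendsto M atTop (𝓝 M0) := by
    apply ProbabilityMeasure.tendsto_of_tendsto_charFun
    intro t
    have h := (tendsto_add_atTop_iff_nat 1).2 (tendsto_cf c hc t)
    have e0 : charFun (M0 : Measure ℝ) t = ((Real.exp (-(t ^ 2 / 2 *
      ((1 + 2 * Real.exp (-c) - 3 * (1 + c) * Real.exp (-2 * c)) / 12))) : ℝ) : ℂ) := by
      change charFun (gaussianReal 0 _) t = _
      rw [charFun_gaussianReal, Real.coe_toNNReal _ (var_nonneg c hc), Complex.ofReal_exp]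
      congr 1
      push_cast
      ring
    rw [e0]
    refine h.congr ?_
    intro n
    change _ = charFun ((P n).map (X (n + 1))) t
    rw [charFun_apply_real, integral_map (hXm _).aemeasurable (by fun_prop), hP, PMF.integral_eq_sum,
      Finset.smul_sum]
    apply Finset.sum_congr rfl
    intro s _
    rw [hw]
    simp [ee, hX]
  have := (ProbabilityMeasure.tendsto_iff_forall_integral_tendsto.1 hconv) g
  refine this.congr ?_
  intro n
  change ∫ x, g x ∂((P n).map (X (n + 1))) = _
  rw [integral_map (hXm _).aemeasurable (by fun_prop), hP, PMF.integral_eq_sum, unifExpect,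
    Finset.sum_div]
  apply Finset.sum_congr rfl
  intro s _
  rw [hw, Fintype.card_fun, Fintype.card_fin, Fintype.card_fin, Nat.cast_pow, smul_eq_mul,
    div_eq_inv_mul]
end
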